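/- arXiv:1006.0590 — 2 statements merged into one kernel-verified Lean document; each statement's English description precedes it below -/
import Mathlib

section
/- For every η ∈ (0, 1) there exists τ with 0 < τ < 1 such that for every ν with 0 < ν ≤ τ there exists an integer n₀ such that the following holds: every digraph G on n ≥ n₀ vertices with minimum semidegree δ⁰(G) ≥ ηn which is a robust (ν, τ)-outexpander contains a Hamilton cycle. -/
/-- The outdegree of a vertex `x` in the digraph with adjacency relation `G`. -/
noncomputable def outDeg {V : Type*} (G : V → V → Prop) (x : V) : ℕ :=
  Nat.card {y : V // G x y}

/-- The indegree of a vertex `x` in the digraph with adjacency relation `G`. -/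
noncomputable def inDeg {V : Type*} (G : V → V → Prop) (x : V) : ℕ :=
  Nat.card {y : V // G y x}

/-- `f` is a Hamilton cycle of the digraph `G`. -/
def IsHamCycle {V : Type*} [Fintype V] (G : V → V → Prop)
    (f : ZMod (Fintype.card V) → V) : Prop :=
  Function.Bijective f ∧ ∀ i, G (f i) (f (i + 1))

/-- The ν-robust outneighbourhood of `S`: all vertices with at least νn inneighbours in `S`. -/
def RobustOutNbhd {V : Type*} [Fintype V] (G : V → V → Prop) (ν : ℝ) (S : Set V) : Set V :=
  {x : V | ν * (Fintype.card V : ℝ) ≤ ({y ∈ S | G y x} : Set V).ncard}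

/-- `G` is a robust (ν, τ)-outexpander: |RN⁺_{ν,G}(S)| ≥ |S| + νn whenever τn < |S| < (1 − τ)n. -/
def RobustOutExpander {V : Type*} [Fintype V] (G : V → V → Prop) (ν τ : ℝ) : Prop :=
  ∀ S : Set V, τ * (Fintype.card V : ℝ) < (S.ncard : ℝ) →
    (S.ncard : ℝ) < (1 - τ) * (Fintype.card V : ℝ) →
    (S.ncard : ℝ) + ν * (Fintype.card V : ℝ) ≤ ((RobustOutNbhd G ν S).ncard : ℝ)

section PermutationCycles
open Equiv Equiv.Perm

variable {V : Type*} [Finite V]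

theorem sameCycle_of_forall_sameCycle_apply {σ ρ : Perm V}
    (h : ∀ x, ρ.SameCycle x (σ x)) {x y : V} (hxy : σ.SameCycle x y) : ρ.SameCycle x y := by
  obtain ⟨k, rfl⟩ := hxy.exists_nat_pow_eq
  clear hxy
  induction k with
  | zero => exact SameCycle.refl _ _
  | succ k ih =>
    rw [pow_succ', Perm.mul_apply]
    exact ih.trans (h _)

theorem sameCycle_mul_swap [DecidableEq V] {ρ : Perm V} {p q : V} (h : ¬ ρ.SameCycle p q) :
    (ρ * swap p q).SameCycle p q := by
  have hp : (ρ * swap p q) p = ρ q := by simp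
  have hstep : (ρ * swap p q).SameCycle p (ρ q) := by
    rw [← hp]
    exact (sameCycle_apply_right).2 (SameCycle.refl _ _)
  have key : ∀ j : ℕ, (ρ * swap p q).SameCycle p ((ρ ^ (j + 1)) q) := by
    intro j
    induction j with
    | zero => simpa using hstep
    | succ j ih =>
      rw [pow_succ', Perm.mul_apply]
      by_cases hq : (ρ ^ (j + 1)) q = q
      · rw [hq]; exact hstep
      · have hne : (ρ ^ (j + 1)) q ≠ p := by
          intro hcon
          apply h
          refine SameCycle.symm ⟨(j + 1 : ℕ), ?_⟩
          exact_mod_cast hcon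
        have : (ρ * swap p q) ((ρ ^ (j + 1)) q) = ρ ((ρ ^ (j + 1)) q) := by
          rw [Perm.mul_apply, swap_apply_of_ne_of_ne hne hq]
        rw [← this]
        exact (sameCycle_apply_right).2 ih
  have hpos := orderOf_pos ρ
  have := key (orderOf ρ - 1)
  rwa [Nat.sub_add_cancel hpos, pow_orderOf_eq_one, Perm.one_apply] at this

theorem sameCycle_mul_swap_of_sameCycle [DecidableEq V] {ρ : Perm V} {p q : V}
    (h : ¬ ρ.SameCycle p q) {x y : V} (hxy : ρ.SameCycle x y) :
    (ρ * swap p q).SameCycle x y := by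
  have hpq := sameCycle_mul_swap h
  refine sameCycle_of_forall_sameCycle_apply (fun z => ?_) hxy
  by_cases hzp : z = p
  · subst hzp
    refine hpq.trans ?_
    have : (ρ * swap z q) q = ρ z := by simp
    rw [← this]
    exact (sameCycle_apply_right).2 (SameCycle.refl _ _)
  by_cases hzq : z = q
  · subst hzq
    refine hpq.symm.trans ?_
    have : (ρ * swap p z) p = ρ z := by simp
    rw [← this]
    exact (sameCycle_apply_right).2 (SameCycle.refl _ _)
  have : (ρ * swap p q) z = ρ z := by
    rw [Perm.mul_apply, swap_apply_of_ne_of_ne hzp hzq]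
  rw [← this]
  exact (sameCycle_apply_right).2 (SameCycle.refl _ _)

/-- The number of ordered pairs of points lying on a common cycle of `σ`. -/
noncomputable def numSameCyclePairs (σ : Perm V) : ℕ :=
  {p : V × V | σ.SameCycle p.1 p.2}.ncard

theorem numSameCyclePairs_lt {σ ρ : Perm V}
    (h : ∀ x y, σ.SameCycle x y → ρ.SameCycle x y) {p q : V}
    (hσ : ¬ σ.SameCycle p q) (hρ : ρ.SameCycle p q) :
    numSameCyclePairs σ < numSameCyclePairs ρ := by
  refine Set.ncard_lt_ncard ?_ (Set.toFinite _)
  refine ⟨fun z hz => h _ _ hz, fun hsub => hσ ?_⟩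
  exact hsub (show (p, q) ∈ {p : V × V | ρ.SameCycle p.1 p.2} from hρ)

theorem exists_perm_fibers_sameCycle {I : Type*} (σ : Perm V) (a b : V → I)
    (hcard : ∀ i, Nat.card {x // a x = i} = Nat.card {x // b x = i}) :
    ∃ π : Perm V, (∀ x, b (π x) = a x) ∧ ∀ p q, a p = a q → (σ * π).SameCycle p q := by
  classical
  have hne : Nonempty {π : Perm V // ∀ x, b (π x) = a x} := by
    have e : ∀ i, {x // a x = i} ≃ {x // b x = i} := fun i => (Finite.card_eq.1 (hcard i)).some
    refine ⟨⟨(Equiv.sigmaFiberEquiv a).symm.trans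
      ((Equiv.sigmaCongrRight e).trans (Equiv.sigmaFiberEquiv b)), fun x => ?_⟩⟩
    exact (e (a x) ⟨x, rfl⟩).2
  obtain ⟨⟨π, hπ⟩, hmax⟩ := Finite.exists_max
    (fun π : {π : Perm V // ∀ x, b (π x) = a x} => numSameCyclePairs (σ * π.1))
  refine ⟨π, hπ, fun p q hpq => ?_⟩
  by_contra hcon
  have hmem : ∀ x, b ((π * swap p q) x) = a x := by
    intro x
    rw [Perm.mul_apply, hπ]
    by_cases hxp : x = p
    · subst hxp; simp [hpq]
    by_cases hxq : x = q
    · subst hxq; simp [hpq]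
    rw [swap_apply_of_ne_of_ne hxp hxq]
  have h1 := hmax ⟨π * swap p q, hmem⟩
  have h2 : numSameCyclePairs (σ * π) < numSameCyclePairs (σ * π * swap p q) :=
    numSameCyclePairs_lt (fun x y h => sameCycle_mul_swap_of_sameCycle hcon h) hcon
      (sameCycle_mul_swap hcon)
  rw [mul_assoc] at h2
  exact absurd h1 (not_le.2 h2)

/-- Merging cycles along a blow-up of a closed walk through the classes `W i`, with one extra
vertex `v` inserted before the class `nxt i₁` and after the class `i₂`. -/
theorem exists_perm_merging_cycles {I : Type*} (σ : Perm V) (H : V → V → Prop)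
    (hrefl : ∀ x, H x x) (nxt : Perm I) (i₀ i₁ i₂ : I)
    (hind : ∀ P : I → Prop, P i₀ → (∀ i, P i → P (nxt i)) → ∀ i, P i)
    (W : I → Finset V) (v : V)
    (hdisj : ∀ i j x, x ∈ W i → x ∈ W j → i = j) (hv : ∀ i, v ∉ W i)
    (hcard : ∀ i, (W (nxt i)).card + Nat.card {_u : Unit // i₂ = i} =
      (W i).card + Nat.card {_u : Unit // i₁ = i})
    (hH : ∀ i, ∀ x ∈ W i, ∀ y ∈ W (nxt i), H x y)
    (hvout : ∀ y ∈ W (nxt i₁), H v y) (hvin : ∀ x ∈ W i₂, H x v)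
    (hret : ∀ i, ∃ s ∈ W i, ∃ k : ℕ, (σ ^ (k + 1)) s ∈ W i ∧
      ∀ l < k, (σ ^ (l + 1)) s ≠ v ∧ ∀ j, (σ ^ (l + 1)) s ∉ W j) :
    ∃ π : Perm V, (∀ x, H x (π x)) ∧
      (∀ x y, σ.SameCycle x y → (σ * π).SameCycle x y) ∧
      ∀ i, ∀ x ∈ W i, (σ * π).SameCycle v x := by
  classical
  -- the source class `a` and the target class `b` of each vertex
  let a : V → I ⊕ V := fun x =>
    if x = v then Sum.inl i₁ else if h : ∃ i, x ∈ W i then Sum.inl h.choose else Sum.inr x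
  let b : V → I ⊕ V := fun x =>
    if x = v then Sum.inl i₂ else
      if h : ∃ i, x ∈ W i then Sum.inl (nxt.symm h.choose) else Sum.inr x
  have hne : ∀ i x, x ∈ W i → x ≠ v := fun i x hx h => hv i (h ▸ hx)
  have hav : a v = Sum.inl i₁ := by simp [a]
  have hbv : b v = Sum.inl i₂ := by simp [b]
  have haW : ∀ i x, x ∈ W i → a x = Sum.inl i := by
    intro i x hx
    have hex : ∃ i, x ∈ W i := ⟨i, hx⟩
    simp only [a, hne i x hx, if_false, dif_pos hex]
    rw [hdisj _ _ _ hex.choose_spec hx]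
  have hbW : ∀ i x, x ∈ W i → b x = Sum.inl (nxt.symm i) := by
    intro i x hx
    have hex : ∃ i, x ∈ W i := ⟨i, hx⟩
    simp only [b, hne i x hx, if_false, dif_pos hex]
    rw [hdisj _ _ _ hex.choose_spec hx]
  have haO : ∀ x, x ≠ v → (∀ i, x ∉ W i) → a x = Sum.inr x := by
    intro x h1 h2
    simp [a, h1, h2]
  have hbO : ∀ x, x ≠ v → (∀ i, x ∉ W i) → b x = Sum.inr x := by
    intro x h1 h2
    simp [b, h1, h2]
  have htri : ∀ x, x = v ∨ (∃ i, x ∈ W i) ∨ (x ≠ v ∧ ∀ i, x ∉ W i) := by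
    intro x
    by_cases h1 : x = v
    · exact Or.inl h1
    by_cases h2 : ∃ i, x ∈ W i
    · exact Or.inr (Or.inl h2)
    · exact Or.inr (Or.inr ⟨h1, not_exists.1 h2⟩)
  have ha_inl : ∀ x i, a x = Sum.inl i ↔ x ∈ W i ∨ (x = v ∧ i₁ = i) := by
    intro x i
    rcases htri x with rfl | ⟨j, hj⟩ | ⟨h1, h2⟩
    · simp [hav, hv]
    · rw [haW j x hj]
      simp only [Sum.inl.injEq, hne j x hj, false_and, or_false]
      exact ⟨fun h => h ▸ hj, fun h => hdisj _ _ _ hj h⟩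
    · simp [haO x h1 h2, h1, h2]
  have hb_inl : ∀ x i, b x = Sum.inl i ↔ x ∈ W (nxt i) ∨ (x = v ∧ i₂ = i) := by
    intro x i
    rcases htri x with rfl | ⟨j, hj⟩ | ⟨h1, h2⟩
    · simp [hbv, hv]
    · rw [hbW j x hj]
      simp only [Sum.inl.injEq, hne j x hj, false_and, or_false, Equiv.symm_apply_eq]
      exact ⟨fun h => h ▸ hj, fun h => hdisj _ _ _ hj h⟩
    · simp [hbO x h1 h2, h1, h2]
  have hfib : ∀ (S : Finset V) (p : Prop), v ∉ S →
      Nat.card {x // x ∈ S ∨ (x = v ∧ p)} = S.card + Nat.card {_u : Unit // p} := by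
    intro S p hvS
    by_cases hp : p
    · have : {x | x ∈ S ∨ (x = v ∧ p)} = ((insert v S : Finset V) : Set V) := by
        ext x; simp [hp, or_comm]
      have h2 : Nat.card {x // x ∈ S ∨ (x = v ∧ p)} = (insert v S).card := by
        change Nat.card ({x | x ∈ S ∨ (x = v ∧ p)} : Set V) = _
        rw [this, Nat.card_coe_set_eq, Set.ncard_coe_finset]
      rw [h2, Finset.card_insert_of_notMem hvS]
      simp [hp]
    · simp [hp]
  have hfibers : ∀ i, Nat.card {x // a x = i} = Nat.card {x // b x = i} := by
    rintro (i | y)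
    · simp only [ha_inl, hb_inl]
      rw [hfib _ _ (hv _), hfib _ _ (hv _)]
      exact (hcard i).symm
    · congr 1
      have : ∀ x, a x = Sum.inr y ↔ b x = Sum.inr y := by
        intro x
        rcases htri x with rfl | ⟨j, hj⟩ | ⟨h1, h2⟩
        · simp [hav, hbv]
        · simp [haW j x hj, hbW j x hj]
        · simp [haO x h1 h2, hbO x h1 h2]
      simp only [this]
  obtain ⟨π, hπ, hsame⟩ := exists_perm_fibers_sameCycle σ a b hfibers
  have hHab : ∀ x y, a x = b y → H x y := by
    intro x y hxy
    rcases htri x with rfl | ⟨j, hj⟩ | ⟨h1, h2⟩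
    · rw [hav] at hxy
      rcases (hb_inl y i₁).1 hxy.symm with h | ⟨rfl, -⟩
      · exact hvout y h
      · exact hrefl _
    · rw [haW j x hj] at hxy
      rcases (hb_inl y j).1 hxy.symm with h | ⟨rfl, rfl⟩
      · exact hH j x hj y h
      · exact hvin x hj
    · rw [haO x h1 h2] at hxy
      rcases htri y with rfl | ⟨j, hj⟩ | ⟨h3, h4⟩
      · simp [hbv] at hxy
      · simp [hbW j y hj] at hxy
      · rw [hbO y h3 h4] at hxy
        obtain rfl := Sum.inr.inj hxy
        exact hrefl _
  have hstep : ∀ x, (σ * π).SameCycle (π.symm x) (σ x) := by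
    intro x
    have : (σ * π) (π.symm x) = σ x := by simp
    rw [← this]
    exact (sameCycle_apply_right).2 (SameCycle.refl _ _)
  have hpre : ∀ x, a (π.symm x) = b x := by
    intro x
    rw [← hπ, Equiv.apply_symm_apply]
  have hfix : ∀ x, x ≠ v → (∀ i, x ∉ W i) → π x = x := by
    intro x h1 h2
    have h3 := hπ x
    rw [haO x h1 h2] at h3
    rcases htri (π x) with h | ⟨j, hj⟩ | ⟨h4, h5⟩
    · rw [h, hbv] at h3; simp at h3
    · rw [hbW j _ hj] at h3; simp at h3
    · rw [hbO _ h4 h5] at h3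
      exact Sum.inr.inj h3
  obtain ⟨x₀, hx₀, -⟩ := hret i₀
  have hall : ∀ i, ∀ x, a x = Sum.inl i → (σ * π).SameCycle x₀ x := by
    apply hind
    · intro x hx
      exact hsame _ _ ((haW _ _ hx₀).trans hx.symm)
    · intro i ih x hx
      obtain ⟨s, hs, k, hk, hl⟩ := hret (nxt i)
      have h1 : (σ * π).SameCycle x₀ (π.symm s) := by
        apply ih
        rw [hpre, hbW _ _ hs, Equiv.symm_apply_apply]
      have h2 : ∀ l ≤ k, (σ * π).SameCycle x₀ ((σ ^ (l + 1)) s) := by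
        intro l
        induction l with
        | zero =>
          intro _
          simpa using h1.trans (hstep s)
        | succ l ihl =>
          intro hlk
          have h3 := ihl (by omega)
          have h4 := hl l (by omega)
          have h5 : (σ * π) ((σ ^ (l + 1)) s) = (σ ^ (l + 1 + 1)) s := by
            rw [Perm.mul_apply, hfix _ h4.1 h4.2, pow_succ' _ (l + 1), Perm.mul_apply]
          rw [← h5]
          exact (sameCycle_apply_right).2 h3
      exact (h2 k le_rfl).trans (hsame _ _ ((haW _ _ hk).trans hx.symm))
  refine ⟨π, fun x => hHab _ _ (hπ x).symm, ?_, ?_⟩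
  · intro x y hxy
    refine sameCycle_of_forall_sameCycle_apply (fun z => ?_) hxy
    have hT : (∃ i, a z = Sum.inl i) → (∃ i, b z = Sum.inl i) →
        (σ * π).SameCycle z (σ z) := by
      rintro ⟨i, hi⟩ ⟨j, hj⟩
      exact ((hall i z hi).symm.trans (hall j (π.symm z) ((hpre z).trans hj))).trans (hstep z)
    rcases htri z with rfl | ⟨j, hj⟩ | ⟨h1, h2⟩
    · exact hT ⟨_, hav⟩ ⟨_, hbv⟩
    · exact hT ⟨_, haW _ _ hj⟩ ⟨_, hbW _ _ hj⟩
    · have : (σ * π) z = σ z := by rw [Perm.mul_apply, hfix z h1 h2]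
      rw [← this]
      exact (sameCycle_apply_right).2 (SameCycle.refl _ _)
  · intro i x hx
    exact (hall _ _ hav).symm.trans (hall i x (haW _ _ hx))

end PermutationCycles

section Position
open Equiv Equiv.Perm

theorem exists_cycle_coordinates {V : Type*} [Finite V] (σ : Perm V) :
    ∃ c i : V → ℕ, (∀ x, c (σ x) = c x) ∧ (∀ x y, c x = c y → i x = i y → x = y) ∧
      ∀ x y, c x = c y → i x ≤ i y → ∀ l ≤ i y - i x, i ((σ ^ l) x) = i x + l := by
  classical
  let Q := Quotient (SameCycle.setoid σ)
  let cl : V → Q := fun x => Quotient.mk (SameCycle.setoid σ) x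
  obtain ⟨N, ⟨e⟩⟩ := Finite.exists_equiv_fin Q
  have hcl : ∀ x y, cl x = cl y ↔ σ.SameCycle x y := fun x y => Quotient.eq
  have hex : ∀ x, ∃ i : ℕ, (σ ^ i) (cl x).out = x := by
    intro x
    have : σ.SameCycle (cl x).out x := (hcl _ _).1 (Quotient.out_eq _)
    exact this.exists_nat_pow_eq
  obtain ⟨i, hspec, hmin⟩ : ∃ i : V → ℕ, (∀ x, (σ ^ i x) (cl x).out = x) ∧
      ∀ x k, (σ ^ k) (cl x).out = x → i x ≤ k :=
    ⟨fun x => Nat.find (hex x), fun x => Nat.find_spec (hex x), fun x _ => Nat.find_min' (hex x)⟩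
  have hcl' : ∀ x y, (e (cl x) : ℕ) = e (cl y) → cl x = cl y :=
    fun x y h => e.injective (Fin.ext h)
  refine ⟨fun x => (e (cl x) : ℕ), i, ?_, ?_, ?_⟩
  · intro x
    have : cl (σ x) = cl x := (hcl _ _).2 ((sameCycle_apply_left).2 (SameCycle.refl _ _))
    simp only [this]
  · intro x y hc hi
    rw [← hspec x, ← hspec y, hi, hcl' x y hc]
  · intro x y hc hi l hl
    have hc' := hcl' x y hc
    have hw : cl ((σ ^ l) x) = cl x := (hcl _ _).2 ((sameCycle_pow_left).2 (SameCycle.refl _ _))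
    refine le_antisymm (hmin _ _ ?_) ?_
    · rw [hw, add_comm, pow_add, Perm.mul_apply, hspec]
    · by_contra hlt
      push Not at hlt
      have h1 : (σ ^ (i y - (i x + l) + i ((σ ^ l) x))) (cl y).out = y := by
        have h2 := hspec ((σ ^ l) x)
        rw [hw, hc'] at h2
        rw [pow_add, Perm.mul_apply, h2, ← Perm.mul_apply, ← pow_add]
        calc (σ ^ (i y - (i x + l) + l)) x
            = (σ ^ (i y - (i x + l) + l)) ((σ ^ i x) (cl x).out) := by rw [hspec]
          _ = (σ ^ i y) (cl x).out := by
              rw [← Perm.mul_apply, ← pow_add]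
              congr 2
              omega
          _ = y := by rw [hc', hspec]
      have := hmin y _ h1
      omega

/-- The vertices can be listed so that among any three of them some path along the cycles of `σ`
starts and ends in the triple without leaving the interval spanned by the triple. -/
theorem exists_cycle_position {V : Type*} [Fintype V] (σ : Perm V) :
    ∃ pos : V → ℕ, Function.Injective pos ∧ (∀ x, pos x < Fintype.card V) ∧
      ∀ x y z, pos x < pos y → pos y < pos z →
        ∃ s, (s = x ∨ s = y ∨ s = z) ∧ ∃ k : ℕ,
          ((σ ^ (k + 1)) s = x ∨ (σ ^ (k + 1)) s = y ∨ (σ ^ (k + 1)) s = z) ∧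
          ∀ l ≤ k, pos x ≤ pos ((σ ^ (l + 1)) s) ∧ pos ((σ ^ (l + 1)) s) ≤ pos z := by
  classical
  obtain ⟨c, i, hc, hinj, hi⟩ := exists_cycle_coordinates σ
  have hcpow : ∀ l x, c ((σ ^ l) x) = c x := by
    intro l x
    induction l with
    | zero => rfl
    | succ l ih => rw [pow_succ', Perm.mul_apply, hc, ih]
  let key : V → ℕ ×ₗ ℕ := fun x => toLex (c x, i x)
  have hkey : ∀ x y, key x < key y ↔ c x < c y ∨ (c x = c y ∧ i x < i y) := by
    intro x y
    exact Prod.Lex.toLex_lt_toLex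
  have hkeyinj : Function.Injective key := by
    intro x y h
    have := Prod.mk.inj (toLex.injective h)
    exact hinj x y this.1 this.2
  let pos : V → ℕ := fun x => (Finset.univ.filter (fun y => key y < key x)).card
  have hlt : ∀ {x y}, key x < key y → pos x < pos y := by
    intro x y h
    apply Finset.card_lt_card
    rw [Finset.ssubset_iff_of_subset]
    · exact ⟨x, by simp [h], by simp⟩
    · intro z hz
      simp only [Finset.mem_filter, Finset.mem_univ, true_and] at hz ⊢
      exact hz.trans h
  have hle : ∀ {x y}, key x ≤ key y → pos x ≤ pos y := by
    intro x y h
    rcases h.lt_or_eq with h | h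
    · exact (hlt h).le
    · rw [hkeyinj h]
  have hlt' : ∀ {x y}, pos x < pos y → key x < key y := by
    intro x y h
    by_contra hcon
    exact absurd (hle (not_lt.1 hcon)) (not_le.2 h)
  have hsame : ∀ x y, c x = c y → i x < i y → ∃ k : ℕ, (σ ^ (k + 1)) x = y ∧
      ∀ l ≤ k, pos x ≤ pos ((σ ^ (l + 1)) x) ∧ pos ((σ ^ (l + 1)) x) ≤ pos y := by
    intro x y hcxy hixy
    have h1 := hi x y hcxy hixy.le
    refine ⟨i y - i x - 1, ?_, fun l hl => ?_⟩
    · apply hinj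
      · rw [hcpow, hcxy]
      · rw [h1 _ (by omega)]; omega
    · have h2 := h1 (l + 1) (by omega)
      constructor
      · apply hle
        apply le_of_lt
        rw [hkey, hcpow, h2]
        exact Or.inr ⟨rfl, by omega⟩
      · rcases Nat.lt_or_ge (i x + (l + 1)) (i y) with h3 | h3
        · apply (hlt _).le
          rw [hkey, hcpow, h2]
          exact Or.inr ⟨hcxy, h3⟩
        · apply le_of_eq
          congr 1
          apply hinj
          · rw [hcpow, hcxy]
          · omega
  refine ⟨pos, ?_, ?_, ?_⟩
  · intro x y hxy
    by_contra hne
    rcases lt_or_gt_of_ne (hkeyinj.ne hne) with h | h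
    · exact absurd hxy (hlt h).ne
    · exact absurd hxy (hlt h).ne'
  · intro x
    apply Finset.card_lt_univ_of_notMem (x := x)
    simp
  · intro x y z hxy hyz
    rcases (hkey x y).1 (hlt' hxy) with h1 | ⟨h1, h2⟩
    · rcases (hkey y z).1 (hlt' hyz) with h3 | ⟨h3, h4⟩
      · refine ⟨y, by simp, orderOf σ - 1, ?_, fun l _ => ⟨?_, ?_⟩⟩
        · rw [Nat.sub_add_cancel (orderOf_pos σ), pow_orderOf_eq_one]; simp
        · apply (hlt _).le
          rw [hkey, hcpow]; exact Or.inl h1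
        · apply (hlt _).le
          rw [hkey, hcpow]; exact Or.inl h3
      · obtain ⟨k, hk, hl⟩ := hsame y z h3 h4
        exact ⟨y, by simp, k, by simp [hk], fun l hlk =>
          ⟨hxy.le.trans (hl l hlk).1, (hl l hlk).2⟩⟩
    · obtain ⟨k, hk, hl⟩ := hsame x y h1 h2
      exact ⟨x, by simp, k, by simp [hk], fun l hlk =>
        ⟨(hl l hlk).1, (hl l hlk).2.trans hyz.le⟩⟩

end Position

section Walks
open Finset

variable {V : Type*} [Fintype V]

open Classical in
/-- Finset version of the `ν`-robust outneighbourhood of `S`. -/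
noncomputable def robustOut (H : V → V → Prop) (ν : ℝ) (S : Finset V) : Finset V :=
  univ.filter fun x => ν * (Fintype.card V : ℝ) ≤ #(S.filter fun y => H y x)

open Classical in
theorem iterate_robustOut_eq_univ [Nonempty V] {H : V → V → Prop} {η τ ν : ℝ} (hτ : 0 < τ)
    (hτν : τ + ν ≤ η)
    (hin : ∀ x, η * (Fintype.card V : ℝ) ≤ #(univ.filter fun y => H y x))
    (hexp : ∀ S : Finset V, τ * (Fintype.card V : ℝ) < #S →
      (#S : ℝ) < (1 - τ) * (Fintype.card V : ℝ) →
      (#S : ℝ) + ν * (Fintype.card V : ℝ) ≤ #(robustOut H ν S))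
    {K : ℕ} (hK : 1 ≤ ν * K) {S : Finset V} (hS : τ * (Fintype.card V : ℝ) < #S) :
    (robustOut H ν)^[K + 1] S = univ := by
  have hn : (0 : ℝ) < Fintype.card V := by exact_mod_cast Fintype.card_pos
  have hbig : ∀ S : Finset V, (1 - τ) * (Fintype.card V : ℝ) ≤ #S → robustOut H ν S = univ := by
    intro S hS
    rw [eq_univ_iff_forall]
    intro x
    simp only [robustOut, mem_filter, mem_univ, true_and]
    have h1 : #(univ.filter fun y => H y x) ≤ #(S.filter fun y => H y x) + #Sᶜ := by
      refine (card_le_card ?_).trans (card_union_le _ _)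
      intro y hy
      by_cases hyS : y ∈ S
      · exact mem_union_left _ (mem_filter.2 ⟨hyS, (mem_filter.1 hy).2⟩)
      · exact mem_union_right _ (mem_compl.2 hyS)
    have h2 : (#(univ.filter fun y => H y x) : ℝ) ≤ #(S.filter fun y => H y x) + #Sᶜ := by
      exact_mod_cast h1
    have h3 : (#S : ℝ) + #Sᶜ = Fintype.card V := by exact_mod_cast card_add_card_compl S
    have h4 := hin x
    nlinarith
  have key : ∀ k : ℕ, (1 - τ) * (Fintype.card V : ℝ) ≤ #((robustOut H ν)^[k] S) ∨
      (τ + ν * k) * (Fintype.card V : ℝ) < #((robustOut H ν)^[k] S) ∧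
      τ * (Fintype.card V : ℝ) < #((robustOut H ν)^[k] S) := by
    intro k
    induction k with
    | zero => right; simpa using hS
    | succ k ih =>
      rw [Function.iterate_succ_apply']
      by_cases h : (1 - τ) * (Fintype.card V : ℝ) ≤ #((robustOut H ν)^[k] S)
      · left
        rw [hbig _ h, card_univ]
        nlinarith
      · right
        rcases ih with ih | ⟨ih1, ih2⟩
        · exact absurd ih h
        · have h5 := hexp _ ih2 (not_le.1 h)
          have hν : 0 < ν := by
            by_contra hcon
            have : ν * (K : ℝ) ≤ 0 := mul_nonpos_of_nonpos_of_nonneg (not_lt.1 hcon) (by positivity)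
            linarith
          push_cast
          constructor <;> nlinarith
  rw [Function.iterate_succ_apply']
  apply hbig
  rcases key K with h | ⟨h, -⟩
  · exact h
  · have h6 : (#((robustOut H ν)^[K] S) : ℝ) ≤ Fintype.card V := by exact_mod_cast card_le_univ _
    nlinarith

open Classical in
/-- The walks `w 0, …, w k` starting at `a` whose last vertex has an edge to `b`. -/
noncomputable def walkBlocks (H : V → V → Prop) (k : ℕ) (a b : V) : Finset (Fin (k + 1) → V) :=
  univ.filter fun w => w 0 = a ∧ (∀ i : Fin k, H (w i.castSucc) (w i.succ)) ∧ H (w (Fin.last k)) b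

open Classical in
theorem pow_le_card_walkBlocks {H : V → V → Prop} {ν : ℝ} (hν : 0 ≤ ν) (a : V) (k : ℕ) :
    ∀ b ∈ (robustOut H ν)^[k] (univ.filter fun y => H a y),
      (ν * (Fintype.card V : ℝ)) ^ k ≤ #(walkBlocks H k a b) := by
  induction k with
  | zero =>
    intro b hb
    have hb' : H a b := by simpa using hb
    have : 0 < #(walkBlocks H 0 a b) :=
      card_pos.2 ⟨fun _ => a, by simp [walkBlocks, hb']⟩
    rw [pow_zero]
    exact_mod_cast this
  | succ k ih =>
    intro b hb
    rw [Function.iterate_succ_apply'] at hb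
    set S := (robustOut H ν)^[k] (univ.filter fun y => H a y)
    have hb1 : ν * (Fintype.card V : ℝ) ≤ #(S.filter fun y => H y b) := (mem_filter.1 hb).2
    have hcard : #((S.filter fun y => H y b).sigma fun c => walkBlocks H k a c) ≤
        #(walkBlocks H (k + 1) a b) := by
      apply card_le_card_of_injOn
        (fun p : (_ : V) × (Fin (k + 1) → V) => (Fin.snoc p.2 p.1 : Fin (k + 2) → V))
      · rintro ⟨c, w⟩ hp
        simp only [coe_sigma, Set.mem_sigma_iff, mem_coe, mem_filter, walkBlocks, mem_univ,
          true_and] at hp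
        obtain ⟨⟨-, hcb⟩, hw0, hw, hwl⟩ := hp
        simp only [mem_coe, walkBlocks, mem_filter, mem_univ, true_and]
        refine ⟨?_, ?_, ?_⟩
        · rw [← Fin.castSucc_zero, Fin.snoc_castSucc, hw0]
        · intro i
          refine Fin.lastCases ?_ (fun i => ?_) i
          · rw [Fin.snoc_castSucc, Fin.succ_last, Fin.snoc_last]
            exact hwl
          · rw [Fin.snoc_castSucc, Fin.succ_castSucc, Fin.snoc_castSucc]
            exact hw i
        · rw [Fin.snoc_last]
          exact hcb
      · rintro ⟨c, w⟩ - ⟨c', w'⟩ - h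
        have h' : (Fin.snoc w c : Fin (k + 2) → V) = Fin.snoc w' c' := h
        obtain ⟨rfl, rfl⟩ := Fin.snoc_injective2 h'
        rfl
    rw [card_sigma] at hcard
    calc (ν * (Fintype.card V : ℝ)) ^ (k + 1)
        = ν * (Fintype.card V : ℝ) * (ν * (Fintype.card V : ℝ)) ^ k := pow_succ' _ _
      _ ≤ #(S.filter fun y => H y b) * (ν * (Fintype.card V : ℝ)) ^ k := by gcongr
      _ ≤ ∑ c ∈ S.filter (fun y => H y b), (#(walkBlocks H k a c) : ℝ) := by
        rw [← nsmul_eq_mul]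
        exact card_nsmul_le_sum _ _ _ fun c hc => ih c (mem_filter.1 hc).1
      _ ≤ _ := by exact_mod_cast hcard

/-- Three blocks of `k + 1` positions each, arranged around a circle. -/
noncomputable def blockSucc (k : ℕ) : Equiv.Perm (Fin 3 × Fin (k + 1)) :=
  Equiv.ofBijective
    (fun p => Fin.lastCases (motive := fun _ => Fin 3 × Fin (k + 1)) (p.1 + 1, 0)
      (fun i => (p.1, i.succ)) p.2) <| by
    rw [← Finite.surjective_iff_bijective]
    rintro ⟨j, i⟩
    refine Fin.cases ⟨(j - 1, Fin.last k), ?_⟩ (fun i => ⟨(j, i.castSucc), ?_⟩) i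
    · simp
    · simp

theorem blockSucc_last (k : ℕ) (j : Fin 3) : blockSucc k (j, Fin.last k) = (j + 1, 0) := by
  simp [blockSucc]

theorem blockSucc_castSucc (k : ℕ) (j : Fin 3) (i : Fin k) :
    blockSucc k (j, i.castSucc) = (j, i.succ) := by
  simp [blockSucc]

theorem blockSucc_ne (k : ℕ) (p : Fin 3 × Fin (k + 1)) : blockSucc k p ≠ p := by
  obtain ⟨j, i⟩ := p
  refine Fin.lastCases ?_ (fun i => ?_) i
  · rw [blockSucc_last]
    intro h
    have h3 : ∀ j : Fin 3, j + 1 ≠ j := by decide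
    exact h3 j (Prod.mk.inj h).1
  · rw [blockSucc_castSucc]
    intro h
    have := congrArg Fin.val (Prod.mk.inj h).2
    simp at this

theorem blockSucc_induction (k : ℕ) (P : Fin 3 × Fin (k + 1) → Prop) (h0 : P (0, 0))
    (hs : ∀ p, P p → P (blockSucc k p)) : ∀ p, P p := by
  have hrow : ∀ j, P (j, 0) → ∀ i, P (j, i) := by
    intro j hj i
    induction i using Fin.induction with
    | zero => exact hj
    | succ i ih =>
      rw [← blockSucc_castSucc]
      exact hs _ ih
  have hnext : ∀ j, P (j, 0) → P (j + 1, 0) := by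
    intro j hj
    rw [← blockSucc_last]
    exact hs _ (hrow j hj _)
  have h1 := hnext _ h0
  have h2 := hnext _ h1
  rintro ⟨j, i⟩
  apply hrow
  fin_cases j
  · exact h0
  · exact h1
  · exact h2

open Classical in
theorem card_closed_walks {H : V → V → Prop} {B : ℝ} (hB : 0 ≤ B) (k : ℕ)
    (hwalk : ∀ a b, B ≤ #(walkBlocks H k a b)) (A : Fin 3 → Finset V) :
    (∏ j, (#(A j) : ℝ)) * B ^ 3 ≤
      #(univ.filter fun x : Fin 3 × Fin (k + 1) → V =>
        (∀ p, H (x p) (x (blockSucc k p))) ∧ ∀ j, x (j, 0) ∈ A j) := by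
  have hcard : #((Fintype.piFinset A).sigma fun h =>
      Fintype.piFinset fun j => walkBlocks H k (h j) (h (j + 1))) ≤
      #(univ.filter fun x : Fin 3 × Fin (k + 1) → V =>
        (∀ p, H (x p) (x (blockSucc k p))) ∧ ∀ j, x (j, 0) ∈ A j) := by
    apply card_le_card_of_injOn
      (fun q : (_ : Fin 3 → V) × (Fin 3 → Fin (k + 1) → V) => fun p => q.2 p.1 p.2)
    · rintro ⟨h, w⟩ hq
      simp only [coe_sigma, Set.mem_sigma_iff, mem_coe, Fintype.mem_piFinset, walkBlocks,
        mem_filter, mem_univ, true_and] at hq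
      obtain ⟨hA, hw⟩ := hq
      simp only [mem_coe, mem_filter, mem_univ, true_and]
      refine ⟨?_, fun j => ?_⟩
      · rintro ⟨j, i⟩
        refine Fin.lastCases ?_ (fun i => ?_) i
        · rw [blockSucc_last]
          simp only
          rw [(hw (j + 1)).1]
          exact (hw j).2.2
        · rw [blockSucc_castSucc]
          exact (hw j).2.1 i
      · rw [(hw j).1]
        exact hA j
    · rintro ⟨h, w⟩ hq ⟨h', w'⟩ hq' heq
      simp only [coe_sigma, Set.mem_sigma_iff, mem_coe, Fintype.mem_piFinset, walkBlocks,
        mem_filter, mem_univ, true_and] at hq hq'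
      have hww : w = w' := by
        funext j i
        exact congrFun heq (j, i)
      subst hww
      have : h = h' := by
        funext j
        rw [← (hq.2 j).1, (hq'.2 j).1]
      subst this
      rfl
  rw [card_sigma] at hcard
  have h1 : (∏ j, (#(A j) : ℝ)) * B ^ 3 ≤ ∑ h ∈ Fintype.piFinset A,
      (#(Fintype.piFinset fun j => walkBlocks H k (h j) (h (j + 1))) : ℝ) := by
    have h2 : (∏ j, (#(A j) : ℝ)) = #(Fintype.piFinset A) := by
      rw [Fintype.card_piFinset]; push_cast; rfl
    rw [h2, ← nsmul_eq_mul]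
    apply card_nsmul_le_sum
    intro h _
    rw [Fintype.card_piFinset]
    push_cast
    calc B ^ 3 = ∏ _j : Fin 3, B := by simp
      _ ≤ _ := prod_le_prod (fun _ _ => hB) fun j _ => hwalk _ _
  refine h1.trans ?_
  exact_mod_cast hcard

end Walks

section Erdos
open Finset

/-- Erdős's theorem: an `ι`-partite hypergraph of positive density on large parts contains a
complete `ι`-partite subhypergraph with `T` vertices in each part. -/
theorem exists_complete_multipartite_fin (T : ℕ) (m : ℕ) :
    ∀ c : ℝ, 0 < c → ∃ L₀ : ℕ, ∀ L : ℕ, L₀ ≤ L → ∀ {V : Type*} [DecidableEq V] (J : Fin m → Finset V),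
      (∀ i, #(J i) ≤ L) → ∀ E : Finset (Fin m → V), E ⊆ Fintype.piFinset J →
      c * (L : ℝ) ^ m ≤ #E →
      ∃ U : Fin m → Finset V, (∀ i, U i ⊆ J i ∧ #(U i) = T) ∧ Fintype.piFinset U ⊆ E := by
  induction m with
  | zero =>
    intro c hc
    refine ⟨0, fun L _ V _ J _ E _ hE => ⟨fun i => i.elim0, fun i => i.elim0, ?_⟩⟩
    have hpos : 0 < #E := by
      have : (0 : ℝ) < #E := lt_of_lt_of_le (by simpa using hc) hE
      exact_mod_cast this
    obtain ⟨x, hx⟩ := card_pos.1 hpos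
    intro y _
    rwa [Subsingleton.elim y x]
  | succ m ih =>
    intro c hc
    obtain ⟨L₁, hL₁⟩ := ih (c / 2 * (c / 4) ^ T) (by positivity)
    refine ⟨max L₁ (⌈4 * (T + 1) / c⌉₊ + 1), fun L hL V _ J hJ E hEJ hE => ?_⟩
    have hLL₁ : L₁ ≤ L := le_trans (le_max_left _ _) hL
    have hLT : 4 * (T + 1) / c ≤ (L : ℝ) := by
      have h1 : ⌈4 * ((T : ℝ) + 1) / c⌉₊ + 1 ≤ L := le_trans (le_max_right _ _) hL
      have h2 := Nat.le_ceil (4 * ((T : ℝ) + 1) / c)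
      have h3 : ((⌈4 * ((T : ℝ) + 1) / c⌉₊ + 1 : ℕ) : ℝ) ≤ L := by exact_mod_cast h1
      push_cast at h3
      linarith
    have hLT' : 4 * ((T : ℝ) + 1) ≤ c * L := by
      rw [div_le_iff₀ hc] at hLT
      linarith
    have hLpos : (0 : ℝ) < L := by
      have : (0 : ℝ) < c * L := lt_of_lt_of_le (by positivity) hLT'
      exact pos_of_mul_pos_right this hc.le
    -- degrees of the tails
    let Q : Finset (Fin m → V) := Fintype.piFinset (fun i => J i.succ)
    let D : (Fin m → V) → Finset V := fun y => (J 0).filter (fun x => Fin.cons x y ∈ E)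
    let Y : Finset (Fin m → V) := Q.filter (fun y => c / 2 * (L : ℝ) ≤ #(D y))
    have hQ : (#Q : ℝ) ≤ (L : ℝ) ^ m := by
      have : #Q ≤ L ^ m := by
        rw [Fintype.card_piFinset]
        calc ∏ i, #(J i.succ) ≤ ∏ _i : Fin m, L := prod_le_prod' fun i _ => hJ _
          _ = L ^ m := by simp
      exact_mod_cast this
    have hDle : ∀ y, #(D y) ≤ L := fun y => (card_filter_le _ _).trans (hJ 0)
    have hEsum : #E = ∑ y ∈ Q, #(D y) := by
      rw [card_eq_sum_card_fiberwise (f := fun x => Fin.tail x) (t := Q)]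
      · refine sum_congr rfl fun y _ => ?_
        refine card_bij (fun x _ => x 0) ?_ ?_ ?_
        · intro x hx
          rw [mem_filter] at hx
          have := Fintype.mem_piFinset.1 (hEJ hx.1) 0
          rw [mem_filter]
          refine ⟨this, ?_⟩
          rw [← hx.2, Fin.cons_self_tail]
          exact hx.1
        · intro x hx x' hx' h
          rw [mem_filter] at hx hx'
          rw [← Fin.cons_self_tail x, ← Fin.cons_self_tail x', hx.2, hx'.2, h]
        · intro z hz
          rw [mem_filter] at hz
          exact ⟨Fin.cons z y, by simp [hz.2], by simp⟩
      · intro x hx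
        have := Fintype.mem_piFinset.1 (hEJ hx)
        exact Fintype.mem_piFinset.2 fun i => this i.succ
    have hY : c / 2 * (L : ℝ) ^ m ≤ #Y := by
      have h1 : (#E : ℝ) ≤ #Y * L + c / 2 * L * (L : ℝ) ^ m := by
        calc (#E : ℝ) = ∑ y ∈ Q, (#(D y) : ℝ) := by rw [hEsum]; push_cast; rfl
          _ ≤ ∑ y ∈ Q, ((if c / 2 * (L : ℝ) ≤ #(D y) then (L : ℝ) else 0) + c / 2 * L) := by
            refine sum_le_sum fun y _ => ?_
            split_ifs with h
            · have : (#(D y) : ℝ) ≤ L := by exact_mod_cast hDle y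
              nlinarith
            · push Not at h
              linarith
          _ = #Y * L + #Q * (c / 2 * L) := by
            rw [sum_add_distrib, ← sum_filter, sum_const, sum_const]
            simp [Y]
          _ ≤ _ := by
            have : (0 : ℝ) ≤ c / 2 * L := by positivity
            nlinarith
      rw [pow_succ] at hE
      have h2 : c / 2 * (L : ℝ) ^ m * L ≤ #Y * L := by nlinarith
      exact le_of_mul_le_mul_right h2 hLpos
    -- average over the `T`-subsets of the first part
    let Z : Finset V → Finset (Fin m → V) := fun S => Y.filter (fun y => S ⊆ D y)
    have hfact : (0 : ℝ) < (T.factorial : ℝ) := by exact_mod_cast T.factorial_pos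
    have hchoose : ∀ y ∈ Y, (c / 4 * L) ^ T / (T.factorial : ℝ) ≤ ((#(D y)).choose T : ℝ) := by
      intro y hy
      have hd : c / 2 * (L : ℝ) ≤ #(D y) := (mem_filter.1 hy).2
      refine le_trans ?_ (Nat.pow_le_choose T (#(D y)))
      have hTd : T ≤ #(D y) + 1 := by
        have : (T : ℝ) ≤ #(D y) + 1 := by nlinarith
        exact_mod_cast this
      gcongr
      push_cast [Nat.cast_sub hTd]
      nlinarith
    have hdouble : ∑ y ∈ Y, (#(D y)).choose T = ∑ S ∈ (J 0).powersetCard T, #(Z S) := by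
      have : ∀ y ∈ Y, (#(D y)).choose T = #(((J 0).powersetCard T).filter (fun S => S ⊆ D y)) := by
        intro y _
        rw [← card_powersetCard]
        congr 1
        ext S
        simp only [mem_powersetCard, mem_filter]
        exact ⟨fun h => ⟨⟨h.1.trans (filter_subset _ _), h.2⟩, h.1⟩, fun h => ⟨h.2, h.1.2⟩⟩
      rw [sum_congr rfl this]
      exact sum_card_bipartiteAbove_eq_sum_card_bipartiteBelow (fun y S => S ⊆ D y)
    have hTS : #((J 0).powersetCard T) ≤ L.choose T := by
      rw [card_powersetCard]
      exact Nat.choose_le_choose _ (hJ 0)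
    obtain ⟨S, hS, hZS⟩ : ∃ S ∈ (J 0).powersetCard T,
        c / 2 * (c / 4) ^ T * (L : ℝ) ^ m ≤ #(Z S) := by
      by_contra hcon
      push Not at hcon
      have hYpos : (0 : ℝ) < #Y := lt_of_lt_of_le (by positivity) hY
      have h1 : (#Y : ℝ) * ((c / 4 * L) ^ T / (T.factorial : ℝ)) ≤
          ∑ S ∈ (J 0).powersetCard T, (#(Z S) : ℝ) := by
        have : ∑ y ∈ Y, ((#(D y)).choose T : ℝ) = ∑ S ∈ (J 0).powersetCard T, (#(Z S) : ℝ) := by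
          exact_mod_cast hdouble
        rw [← this, ← nsmul_eq_mul]
        exact card_nsmul_le_sum _ _ _ hchoose
      have hne : ((J 0).powersetCard T).Nonempty := by
        rw [nonempty_iff_ne_empty]
        intro h0
        rw [h0, sum_empty] at h1
        have : 0 < (#Y : ℝ) * ((c / 4 * L) ^ T / (T.factorial : ℝ)) := by positivity
        linarith
      have h2 : ∑ S ∈ (J 0).powersetCard T, (#(Z S) : ℝ) <
          ∑ S ∈ (J 0).powersetCard T, c / 2 * (c / 4) ^ T * (L : ℝ) ^ m :=
        sum_lt_sum_of_nonempty hne hcon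
      rw [sum_const, nsmul_eq_mul] at h2
      have h3 : (#((J 0).powersetCard T) : ℝ) ≤ (L : ℝ) ^ T / (T.factorial : ℝ) :=
        le_trans (by exact_mod_cast hTS) (Nat.choose_le_pow_div T L)
      have h4 : (#((J 0).powersetCard T) : ℝ) * (c / 2 * (c / 4) ^ T * (L : ℝ) ^ m) ≤
          (L : ℝ) ^ T / (T.factorial : ℝ) * (c / 2 * (c / 4) ^ T * (L : ℝ) ^ m) := by gcongr
      have h5 : c / 2 * (L : ℝ) ^ m * ((c / 4 * L) ^ T / (T.factorial : ℝ)) ≤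
          (#Y : ℝ) * ((c / 4 * L) ^ T / (T.factorial : ℝ)) := by gcongr
      have h6 : (L : ℝ) ^ T / (T.factorial : ℝ) * (c / 2 * (c / 4) ^ T * (L : ℝ) ^ m) =
          c / 2 * (L : ℝ) ^ m * ((c / 4 * L) ^ T / (T.factorial : ℝ)) := by
        rw [mul_pow]; ring
      linarith
    obtain ⟨hSJ, hST⟩ := mem_powersetCard.1 hS
    obtain ⟨U, hU, hUE⟩ := hL₁ L hLL₁ (fun i => J i.succ) (fun i => hJ _) (Z S)
      ((filter_subset _ _).trans (filter_subset _ _)) hZS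
    refine ⟨Fin.cons S U, ?_, ?_⟩
    · intro i
      refine Fin.cases ?_ (fun i => ?_) i
      · exact ⟨hSJ, hST⟩
      · exact hU i
    · intro x hx
      rw [Fintype.mem_piFinset] at hx
      have h0 : x 0 ∈ S := hx 0
      have ht : Fin.tail x ∈ Fintype.piFinset U := Fintype.mem_piFinset.2 fun i => hx i.succ
      have h1 := (mem_filter.1 (hUE ht)).2 h0
      have h2 := (mem_filter.1 h1).2
      rwa [Fin.cons_self_tail] at h2

theorem exists_complete_multipartite (ι : Type*) [Fintype ι] [DecidableEq ι] (T : ℕ) (c : ℝ)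
    (hc : 0 < c) : ∃ L₀ : ℕ, ∀ L : ℕ, L₀ ≤ L → ∀ {V : Type*} [DecidableEq V]
      (J : ι → Finset V), (∀ i, #(J i) ≤ L) → ∀ E : Finset (ι → V), E ⊆ Fintype.piFinset J →
      c * (L : ℝ) ^ (Fintype.card ι) ≤ #E →
      ∃ U : ι → Finset V, (∀ i, U i ⊆ J i ∧ #(U i) = T) ∧ Fintype.piFinset U ⊆ E := by
  obtain ⟨L₀, hL₀⟩ := exists_complete_multipartite_fin T (Fintype.card ι) c hc
  refine ⟨L₀, fun L hL V _ J hJ E hEJ hE => ?_⟩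
  let e : ι ≃ Fin (Fintype.card ι) := Fintype.equivFin ι
  have hinj : Function.Injective (fun x : ι → V => x ∘ e.symm) :=
    e.symm.surjective.injective_comp_right
  obtain ⟨U, hU, hUE⟩ := hL₀ L hL (fun i => J (e.symm i)) (fun i => hJ _)
    (E.image (fun x => x ∘ e.symm)) (by
      intro x hx
      obtain ⟨y, hy, rfl⟩ := mem_image.1 hx
      have := Fintype.mem_piFinset.1 (hEJ hy)
      exact Fintype.mem_piFinset.2 fun i => this _) (by
      rwa [card_image_of_injective _ hinj])
  refine ⟨fun i => U (e i), fun i => ?_, fun x hx => ?_⟩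
  · simpa using hU (e i)
  · have hx' : x ∘ e.symm ∈ Fintype.piFinset U := by
      refine Fintype.mem_piFinset.2 fun i => ?_
      simpa using Fintype.mem_piFinset.1 hx (e.symm i)
    obtain ⟨y, hy, hyx⟩ := mem_image.1 (hUE hx')
    rwa [← hinj hyx]
end Erdos

section Blowup
open Finset

open Classical in
theorem card_filter_mul_card_le {ι V : Type*} [Fintype ι] [Fintype V]
    (P : (ι → V) → Prop) (i : ι) (L : ℕ)
    (h : ∀ x, #(univ.filter fun a => P (Function.update x i a)) ≤ L) :
    #(univ.filter P) * Fintype.card V ≤ L * Fintype.card V ^ Fintype.card ι := by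
  have h1 : #((univ.filter P) ×ˢ (univ : Finset V)) ≤
      #((univ : Finset (ι → V)).sigma fun x =>
        univ.filter fun a => P (Function.update x i a)) := by
    apply card_le_card_of_injOn
      (fun q : (ι → V) × V => (⟨Function.update q.1 i q.2, q.1 i⟩ : (_ : ι → V) × V))
    · rintro ⟨x, a⟩ hx
      simpa using hx
    · rintro ⟨x, a⟩ - ⟨x', a'⟩ - heq
      simp only [Sigma.mk.injEq, heq_eq_eq] at heq
      obtain ⟨h1, h2⟩ := heq
      have ha : a = a' := by simpa using congrFun h1 i
      have hx : x = x' := by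
        funext j
        by_cases hj : j = i
        · rw [hj, h2]
        · simpa [hj] using congrFun h1 j
      rw [ha, hx]
  rw [card_product, card_univ, card_sigma] at h1
  refine h1.trans ?_
  calc ∑ x : ι → V, #(univ.filter fun a => P (Function.update x i a)) ≤ ∑ _x : ι → V, L :=
        sum_le_sum fun x _ => h x
    _ = L * Fintype.card V ^ Fintype.card ι := by
      rw [sum_const, card_univ, Fintype.card_fun, smul_eq_mul, mul_comm]

open Classical in
theorem card_filter_not_separated {ι V : Type*} [Fintype ι] [Fintype V] (g : V → ℕ) (v : V)
    (L : ℕ) (hg : ∀ t, #(univ.filter fun a => g a = t) ≤ L) :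
    #(univ.filter fun x : ι → V =>
        ¬ (Function.Injective (fun i => g (x i)) ∧ ∀ i, g (x i) ≠ g v)) * Fintype.card V ≤
      Fintype.card ι * (Fintype.card ι + 1) * L * Fintype.card V ^ Fintype.card ι := by
  let P : ι × Option ι → (ι → V) → Prop := fun q x =>
    match q.2 with
    | none => g (x q.1) = g v
    | some j => q.1 ≠ j ∧ g (x q.1) = g (x j)
  have hP : ∀ q, #(univ.filter (P q)) * Fintype.card V ≤ L * Fintype.card V ^ Fintype.card ι := by
    rintro ⟨i, o⟩
    apply card_filter_mul_card_le _ i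
    intro x
    cases o with
    | none =>
      refine le_trans (card_le_card ?_) (hg (g v))
      intro a ha
      simpa [P] using ha
    | some j =>
      refine le_trans (card_le_card ?_) (hg (g (x j)))
      intro a ha
      simp only [P, mem_filter, mem_univ, true_and] at ha ⊢
      have := ha.2
      rwa [Function.update_self, Function.update_of_ne (Ne.symm ha.1)] at this
  have hsub : (univ.filter fun x : ι → V =>
      ¬ (Function.Injective (fun i => g (x i)) ∧ ∀ i, g (x i) ≠ g v)) ⊆
      (univ : Finset (ι × Option ι)).biUnion fun q => univ.filter (P q) := by
    intro x hx
    simp only [mem_filter, mem_univ, true_and, mem_biUnion] at hx ⊢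
    by_cases h : ∀ i, g (x i) ≠ g v
    · have h2 : ¬ Function.Injective (fun i => g (x i)) := fun h' => hx ⟨h', h⟩
      simp only [Function.Injective] at h2
      push Not at h2
      obtain ⟨i, j, hij, hne⟩ := h2
      exact ⟨(i, some j), hne, hij⟩
    · push Not at h
      obtain ⟨i, hi⟩ := h
      exact ⟨(i, none), hi⟩
  calc _ ≤ (∑ q : ι × Option ι, #(univ.filter (P q))) * Fintype.card V := by
        gcongr
        exact (card_le_card hsub).trans card_biUnion_le
    _ = ∑ q : ι × Option ι, #(univ.filter (P q)) * Fintype.card V := by rw [sum_mul]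
    _ ≤ ∑ _q : ι × Option ι, L * Fintype.card V ^ Fintype.card ι := sum_le_sum fun q _ => hP q
    _ = _ := by
      rw [sum_const, card_univ, Fintype.card_prod, Fintype.card_option, smul_eq_mul, mul_assoc,
        mul_assoc, mul_assoc]

theorem exists_separated_blowup (ι : Type) [Fintype ι] [DecidableEq ι] (T : ℕ) (c : ℝ)
    (hc : 0 < c) (hT : 0 < T) :
    ∃ L n₀ : ℕ, ∀ {V : Type} [Fintype V] (pos : V → ℕ), Function.Injective pos →
      (∀ x, pos x < Fintype.card V) → n₀ ≤ Fintype.card V → ∀ (v : V) (E : Finset (ι → V)),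
      c * (Fintype.card V : ℝ) ^ Fintype.card ι ≤ #E →
      ∃ (U : ι → Finset V) (t : ι → ℕ), (∀ i, #(U i) = T) ∧
        (∀ i, ∀ x ∈ U i, pos x / L = t i) ∧ Function.Injective t ∧ (∀ i, t i ≠ pos v / L) ∧
        Fintype.piFinset U ⊆ E := by
  classical
  set m := Fintype.card ι with hm
  obtain ⟨L₀, hL₀⟩ := exists_complete_multipartite.{0, 0} ι T (c / 2 ^ (m + 1)) (by positivity)
  set L := L₀ + 1 with hL
  refine ⟨L, max L (⌈2 * (m * (m + 1) * L) / c⌉₊ + 1), fun {V} _ pos hinj hlt hn v E hE => ?_⟩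
  set n := Fintype.card V with hnV
  have hLpos : 0 < L := Nat.succ_pos _
  have hLR : (0 : ℝ) < L := by exact_mod_cast hLpos
  have hLn : L ≤ n := (le_max_left _ _).trans hn
  have hnpos : (0 : ℝ) < n := by exact_mod_cast hLpos.trans_le hLn
  have hbign : 2 * (m * (m + 1) * L) ≤ c * (n : ℝ) := by
    have h1 : ⌈2 * ((m : ℝ) * (m + 1) * L) / c⌉₊ ≤ n :=
      (Nat.le_succ _).trans ((le_max_right _ _).trans hn)
    have h2 := (Nat.le_ceil (2 * ((m : ℝ) * (m + 1) * L) / c)).trans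
      (show ((⌈2 * ((m : ℝ) * (m + 1) * L) / c⌉₊ : ℕ) : ℝ) ≤ n by exact_mod_cast h1)
    rw [div_le_iff₀ hc] at h2
    linarith
  let g : V → ℕ := fun x => pos x / L
  have hg : ∀ t, #(univ.filter fun a => g a = t) ≤ L := by
    intro t
    have : #(univ.filter fun a => g a = t) ≤ #(Ico (t * L) (t * L + L)) := by
      apply card_le_card_of_injOn pos
      · intro a ha
        simp only [coe_filter, Set.mem_ofPred_eq, mem_univ, true_and, g] at ha
        rw [coe_Ico, Set.mem_Ico, ← ha]
        exact ⟨Nat.div_mul_le_self _ _, Nat.lt_div_mul_add hLpos⟩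
      · exact hinj.injOn
    simpa using this
  let good : Finset (ι → V) := E.filter fun x =>
    Function.Injective (fun i => g (x i)) ∧ ∀ i, g (x i) ≠ g v
  have hgood : c / 2 * (n : ℝ) ^ m ≤ #good := by
    let bad : Finset (ι → V) := univ.filter fun x =>
      ¬ (Function.Injective (fun i => g (x i)) ∧ ∀ i, g (x i) ≠ g v)
    have hbad : #bad * n ≤ m * (m + 1) * L * n ^ m := by
      convert card_filter_not_separated (ι := ι) g v L hg
    have h1 : #E ≤ #good + #bad := by
      refine (card_le_card ?_).trans (card_union_le _ _)
      intro x hx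
      by_cases h : Function.Injective (fun i => g (x i)) ∧ ∀ i, g (x i) ≠ g v
      · exact mem_union_left _ (mem_filter.2 ⟨hx, h⟩)
      · exact mem_union_right _ (mem_filter.2 ⟨mem_univ _, h⟩)
    have h2 : (#E : ℝ) ≤ #good + #bad := by exact_mod_cast h1
    have h3 : (#bad : ℝ) * n ≤ m * (m + 1) * L * (n : ℝ) ^ m := by exact_mod_cast hbad
    have h4 : (#bad : ℝ) * n ≤ c / 2 * (n : ℝ) ^ m * n := by
      refine h3.trans ?_
      have : (0 : ℝ) ≤ (n : ℝ) ^ m := by positivity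
      nlinarith
    have h5 := le_of_mul_le_mul_right h4 hnpos
    linarith
  have hN : ((n / L + 1 : ℕ) : ℝ) ≤ 2 * n / L := by
    have h1 : ((n / L : ℕ) : ℝ) ≤ n / L := Nat.cast_div_le
    have h2 : (1 : ℝ) ≤ n / L := by
      rw [le_div_iff₀ hLR, one_mul]
      exact_mod_cast hLn
    push_cast
    rw [mul_div_assoc]
    linarith
  obtain ⟨t, -, ht⟩ : ∃ t ∈ Fintype.piFinset (fun _ : ι => range (n / L + 1)),
      c / 2 ^ (m + 1) * (L : ℝ) ^ m ≤ #(good.filter fun x => (fun i => g (x i)) = t) := by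
    apply exists_le_card_fiber_of_nsmul_le_card_of_maps_to
    · intro x _
      rw [Fintype.mem_piFinset]
      intro i
      rw [mem_range, Nat.lt_succ_iff]
      exact Nat.div_le_div_right (hlt _).le
    · rw [Fintype.piFinset_nonempty]
      exact fun _ => ⟨0, by simp⟩
    · have hbox : #(Fintype.piFinset (fun _ : ι => range (n / L + 1))) = (n / L + 1) ^ m := by
        rw [Fintype.card_piFinset]
        simp [hm]
      rw [hbox, nsmul_eq_mul, Nat.cast_pow]
      refine le_trans ?_ hgood
      calc ((n / L + 1 : ℕ) : ℝ) ^ m * (c / 2 ^ (m + 1) * (L : ℝ) ^ m)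
          ≤ (2 * n / L) ^ m * (c / 2 ^ (m + 1) * (L : ℝ) ^ m) := by gcongr
        _ = c / 2 * (n : ℝ) ^ m := by
          rw [div_pow, mul_pow, pow_succ]
          field_simp
  obtain ⟨U, hU, hUE⟩ := hL₀ L (Nat.le_succ _) (fun i => univ.filter fun a => g a = t i)
    (fun i => hg _) (good.filter fun x => (fun i => g (x i)) = t) (by
      intro x hx
      rw [Fintype.mem_piFinset]
      intro i
      simpa using congrFun (mem_filter.1 hx).2 i) ht
  have hne : ∀ i, (U i).Nonempty := fun i => card_pos.1 ((hU i).2 ▸ hT)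
  obtain ⟨x, hx⟩ := Fintype.piFinset_nonempty.2 hne
  obtain ⟨hxg, hxt⟩ := mem_filter.1 (hUE hx)
  obtain ⟨-, hxinj, hxv⟩ := mem_filter.1 hxg
  refine ⟨U, t, fun i => (hU i).2, fun i y hy => ?_, hxt ▸ hxinj, fun i => ?_, ?_⟩
  · exact (mem_filter.1 ((hU i).1 hy)).2
  · rw [← hxt]
    exact hxv i
  · exact hUE.trans ((filter_subset _ _).trans (filter_subset _ _))

end Blowup

section Merging
open Finset Equiv Equiv.Perm

theorem exists_lt_lt_of_three_le_card {V : Type*} {pos : V → ℕ} (hinj : Function.Injective pos)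
    {S : Finset V} (hS : 3 ≤ #S) :
    ∃ x ∈ S, ∃ y ∈ S, ∃ z ∈ S, pos x < pos y ∧ pos y < pos z := by
  obtain ⟨a, ha, b, hb, c, hc, hab, hac, hbc⟩ := two_lt_card.1 hS
  rcases lt_or_gt_of_ne (hinj.ne hab) with h1 | h1 <;>
  rcases lt_or_gt_of_ne (hinj.ne hac) with h2 | h2 <;>
  rcases lt_or_gt_of_ne (hinj.ne hbc) with h3 | h3
  · exact ⟨a, ha, b, hb, c, hc, h1, h3⟩
  · exact ⟨a, ha, c, hc, b, hb, h2, h3⟩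
  · omega
  · exact ⟨c, hc, a, ha, b, hb, h2, h1⟩
  · exact ⟨b, hb, a, ha, c, hc, h1, h2⟩
  · omega
  · exact ⟨b, hb, c, hc, a, ha, h3, h2⟩
  · exact ⟨c, hc, b, hb, a, ha, h3, h1⟩

theorem exists_perm_of_separated_blowup {V : Type*} [Fintype V] {σ : Perm V}
    {H : V → V → Prop} (hrefl : ∀ x, H x x) {pos : V → ℕ} (hinj : Function.Injective pos)
    (hpos : ∀ x y z, pos x < pos y → pos y < pos z →
      ∃ s, (s = x ∨ s = y ∨ s = z) ∧ ∃ k : ℕ,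
        ((σ ^ (k + 1)) s = x ∨ (σ ^ (k + 1)) s = y ∨ (σ ^ (k + 1)) s = z) ∧
        ∀ l ≤ k, pos x ≤ pos ((σ ^ (l + 1)) s) ∧ pos ((σ ^ (l + 1)) s) ≤ pos z)
    {L k : ℕ} {v : V} {U : Fin 3 × Fin (k + 2) → Finset V} {t : Fin 3 × Fin (k + 2) → ℕ}
    (hU : ∀ p, #(U p) = 4) (hUt : ∀ p, ∀ x ∈ U p, pos x / L = t p)
    (ht : Function.Injective t) (htv : ∀ p, t p ≠ pos v / L)
    (hH : ∀ p, ∀ x ∈ U p, ∀ y ∈ U (blockSucc (k + 1) p), H x y)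
    (hvout : ∀ y ∈ U (1, 0), H v y) (hvin : ∀ x ∈ U (2, 0), H x v) :
    ∃ π : Perm V, (∀ x, H x (π x)) ∧
      (∀ x y, σ.SameCycle x y → (σ * π).SameCycle x y) ∧
      ∀ p, ∃ x ∈ U p, (σ * π).SameCycle v x := by
  classical
  have hsub : ∀ p, ∃ S ⊆ U p, #S = if p.1 = 1 ∨ p = (2, 0) then 4 else 3 := by
    intro p
    apply exists_subset_card_eq
    rw [hU]
    split_ifs <;> omega
  choose W hWU hWcard using hsub
  have hW3 : ∀ p, 3 ≤ #(W p) := by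
    intro p
    rw [hWcard]
    split_ifs <;> omega
  have hWt : ∀ p, ∀ x ∈ W p, pos x / L = t p := fun p x hx => hUt p x (hWU p hx)
  have hunit : ∀ q : Prop, Nat.card {_u : Unit // q} = if q then 1 else 0 := by
    intro q
    by_cases hq : q <;> simp [hq]
  have hcard : ∀ p, #(W (blockSucc (k + 1) p)) + Nat.card {_u : Unit // (2, 0) = p} =
      #(W p) + Nat.card {_u : Unit // (0, Fin.last (k + 1)) = p} := by
    rintro ⟨j, i⟩
    rw [hunit, hunit]
    refine Fin.lastCases ?_ (fun i => ?_) i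
    · rw [blockSucc_last, hWcard, hWcard]
      have hl : Fin.last (k + 1) ≠ 0 := by simp [Fin.ext_iff]
      have hl' : (0 : Fin (k + 2)) ≠ Fin.last (k + 1) := hl.symm
      fin_cases j <;> simp [hl, hl']
    · rw [blockSucc_castSucc, hWcard, hWcard]
      have hl' : Fin.last (k + 1) ≠ i.castSucc := (Fin.castSucc_lt_last i).ne'
      by_cases hi : i = 0
      · subst hi
        fin_cases j <;> simp
      · have hi' : i.castSucc ≠ 0 := by simpa using hi
        fin_cases j <;> simp [hl', hi', hi'.symm]
  have hret : ∀ p, ∃ s ∈ W p, ∃ r : ℕ, (σ ^ (r + 1)) s ∈ W p ∧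
      ∀ l < r, (σ ^ (l + 1)) s ≠ v ∧ ∀ q, (σ ^ (l + 1)) s ∉ W q := by
    intro p
    obtain ⟨x, hx, y, hy, z, hz, hxy, hyz⟩ := exists_lt_lt_of_three_le_card hinj (hW3 p)
    obtain ⟨s, hs, r, hr, hl⟩ := hpos x y z hxy hyz
    have hsW : s ∈ W p := by rcases hs with rfl | rfl | rfl <;> assumption
    have hrW : (σ ^ (r + 1)) s ∈ W p := by rcases hr with h | h | h <;> rw [h] <;> assumption
    have hex : ∃ r, (σ ^ (r + 1)) s ∈ W p := ⟨r, hrW⟩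
    refine ⟨s, hsW, Nat.find hex, Nat.find_spec hex, fun l hlt => ?_⟩
    have hlr : l ≤ r := hlt.le.trans (Nat.find_min' hex hrW)
    have hgrp : pos ((σ ^ (l + 1)) s) / L = t p := by
      apply le_antisymm
      · rw [← hWt p z hz]
        exact Nat.div_le_div_right (hl l hlr).2
      · rw [← hWt p x hx]
        exact Nat.div_le_div_right (hl l hlr).1
    refine ⟨fun h => htv p ?_, fun q hq => ?_⟩
    · rw [← hgrp, h]
    · have hqp : q = p := ht ((hWt q _ hq).symm.trans hgrp)
      exact Nat.find_min hex hlt (hqp ▸ hq)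
  obtain ⟨π, h1, h2, h3⟩ := exists_perm_merging_cycles σ H hrefl (blockSucc (k + 1)) (0, 0)
    (0, Fin.last (k + 1)) (2, 0) (blockSucc_induction (k + 1)) W v
    (fun p q x hp hq => ht ((hWt p x hp).symm.trans (hWt q x hq)))
    (fun p hp => htv p (hWt p v hp).symm) hcard
    (fun p x hx y hy => hH p x (hWU _ hx) y (hWU _ hy))
    (fun y hy => hvout y (by rw [blockSucc_last] at hy; exact hWU _ hy))
    (fun x hx => hvin x (hWU _ hx)) hret
  refine ⟨π, h1, h2, fun p => ?_⟩
  obtain ⟨x, hx⟩ := card_pos.1 (lt_of_lt_of_le (by norm_num) (hW3 p))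
  exact ⟨x, hWU p hx, h3 p x hx⟩

open Classical in
/-- A robust `(ν, τ)`-outexpander of minimum semidegree at least `ηn`, in terms of finsets. -/
structure IsDenseExpander {V : Type*} [Fintype V] (H : V → V → Prop) (η ν τ : ℝ) : Prop where
  out_le : ∀ x, η * (Fintype.card V : ℝ) ≤ #(univ.filter fun y => H x y)
  in_le : ∀ x, η * (Fintype.card V : ℝ) ≤ #(univ.filter fun y => H y x)
  expand : ∀ S : Finset V, τ * (Fintype.card V : ℝ) < #S →
    (#S : ℝ) < (1 - τ) * (Fintype.card V : ℝ) →
    (#S : ℝ) + ν * (Fintype.card V : ℝ) ≤ #(robustOut H ν S)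

open Classical in
theorem IsDenseExpander.comp_perm {V : Type*} [Fintype V] {G : V → V → Prop} {η ν τ : ℝ}
    (h : IsDenseExpander G η ν τ) (σ : Perm V) :
    IsDenseExpander (fun x y => G x (σ y)) η ν τ where
  out_le x := by
    refine (h.out_le x).trans (le_of_eq ?_)
    congr 1
    refine card_bij (fun y _ => σ.symm y) ?_ ?_ ?_
    · intro y hy; simpa using hy
    · intro y _ y' _ hyy; exact σ.symm.injective hyy
    · intro y hy; exact ⟨σ y, by simpa using hy, by simp⟩
  in_le x := h.in_le (σ x)
  expand S h1 h2 := by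
    refine (h.expand S h1 h2).trans (le_of_eq ?_)
    congr 1
    refine card_bij (fun y _ => σ.symm y) ?_ ?_ ?_
    · intro y hy; simpa [robustOut] using hy
    · intro y _ y' _ hyy; exact σ.symm.injective hyy
    · intro y hy; exact ⟨σ y, by simpa [robustOut] using hy, by simp⟩

open Classical in
theorem IsDenseExpander.exists_perm {V : Type*} [Fintype V] {G : V → V → Prop} {η ν τ : ℝ}
    (h : IsDenseExpander G η ν τ) (hν : 0 < ν) (hτη : τ < η) :
    ∃ σ : Perm V, ∀ x, G x (σ x) := by
  have hall : ∀ A : Finset V, #A ≤ #(univ.filter fun b => ∃ a ∈ A, G a b) := by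
    intro A
    rcases A.eq_empty_or_nonempty with rfl | ⟨x, hx⟩
    · simp
    have hn : (0 : ℝ) < Fintype.card V := by exact_mod_cast Fintype.card_pos_iff.2 ⟨x⟩
    by_cases h1 : τ * (Fintype.card V : ℝ) < #A
    · by_cases h2 : (#A : ℝ) < (1 - τ) * (Fintype.card V : ℝ)
      · have h3 := h.expand A h1 h2
        have h4 : #(robustOut G ν A) ≤ #(univ.filter fun b => ∃ a ∈ A, G a b) := by
          apply card_le_card
          intro y hy
          simp only [robustOut, mem_filter, mem_univ, true_and] at hy ⊢
          have h5 : (0 : ℝ) < #(A.filter fun z => G z y) := lt_of_lt_of_le (by positivity) hy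
          have h6 : 0 < #(A.filter fun z => G z y) := by exact_mod_cast h5
          obtain ⟨z, hz⟩ := card_pos.1 h6
          exact ⟨z, (mem_filter.1 hz).1, (mem_filter.1 hz).2⟩
        have h5 : (#(robustOut G ν A) : ℝ) ≤ #(univ.filter fun b => ∃ a ∈ A, G a b) := by
          exact_mod_cast h4
        have h6 : (0 : ℝ) < ν * (Fintype.card V : ℝ) := by positivity
        have h7 : (#A : ℝ) ≤ #(univ.filter fun b => ∃ a ∈ A, G a b) := by linarith
        exact_mod_cast h7
      · have h3 : (univ.filter fun b => ∃ a ∈ A, G a b) = univ := by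
          rw [eq_univ_iff_forall]
          intro y
          simp only [mem_filter, mem_univ, true_and]
          by_contra hcon
          push Not at hcon
          have h4 : #(univ.filter fun z => G z y) ≤ #Aᶜ := by
            apply card_le_card
            intro z hz
            rw [mem_compl]
            exact fun hzA => hcon z hzA (mem_filter.1 hz).2
          have h5 : (#(univ.filter fun z => G z y) : ℝ) ≤ #Aᶜ := by exact_mod_cast h4
          have h6 : (#A : ℝ) + #Aᶜ = Fintype.card V := by exact_mod_cast card_add_card_compl A
          have h7 := h.in_le y
          nlinarith
        rw [h3]
        exact card_le_univ A
    · have h3 : #(univ.filter fun y => G x y) ≤ #(univ.filter fun b => ∃ a ∈ A, G a b) := by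
        apply card_le_card
        intro y hy
        simp only [mem_filter, mem_univ, true_and] at hy ⊢
        exact ⟨x, hx, hy⟩
      have h4 : (#(univ.filter fun y => G x y) : ℝ) ≤
        #(univ.filter fun b => ∃ a ∈ A, G a b) := by exact_mod_cast h3
      have h5 := h.out_le x
      have h6 : (#A : ℝ) ≤ #(univ.filter fun b => ∃ a ∈ A, G a b) := by nlinarith
      exact_mod_cast h6
  obtain ⟨f, hf, hGf⟩ := (Fintype.all_card_le_filter_rel_iff_exists_injective G).1 hall
  exact ⟨Equiv.ofBijective f (Finite.injective_iff_bijective.1 hf), hGf⟩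

open Classical in
theorem exists_half_not_sameCycle {V : Type*} [Fintype V] {σ : Perm V} {x y : V}
    (hxy : ¬ σ.SameCycle x y) :
    ∃ v, (Fintype.card V : ℝ) / 2 ≤ #(univ.filter fun z => ¬ σ.SameCycle v z) := by
  have h1 : Fintype.card V ≤ #(univ.filter fun z => ¬ σ.SameCycle x z) +
      #(univ.filter fun z => ¬ σ.SameCycle y z) := by
    refine le_trans (card_le_card ?_) (card_union_le _ _)
    intro z _
    by_cases h : σ.SameCycle x z
    · refine mem_union_right _ (mem_filter.2 ⟨mem_univ _, fun h' => hxy (h.trans h'.symm)⟩)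
    · exact mem_union_left _ (mem_filter.2 ⟨mem_univ _, h⟩)
  have h2 : (Fintype.card V : ℝ) ≤ #(univ.filter fun z => ¬ σ.SameCycle x z) +
      #(univ.filter fun z => ¬ σ.SameCycle y z) := by exact_mod_cast h1
  by_contra hcon
  push Not at hcon
  have h3 := hcon x
  have h4 := hcon y
  linarith

theorem exists_perm_more_sameCyclePairs {η ν τ : ℝ} (hη : 0 < η) (hτ : 0 < τ) (hν : 0 < ν)
    (hτν : τ + ν ≤ η) :
    ∃ n₀ : ℕ, ∀ (V : Type) [Fintype V] (H : V → V → Prop), n₀ ≤ Fintype.card V →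
      IsDenseExpander H η ν τ → (∀ x, H x x) → ∀ (σ : Perm V) (x y : V), ¬ σ.SameCycle x y →
      ∃ π : Perm V, (∀ x, H x (π x)) ∧ numSameCyclePairs σ < numSameCyclePairs (σ * π) := by
  classical
  obtain ⟨K, hK⟩ : ∃ K : ℕ, 1 ≤ ν * K := by
    obtain ⟨K, hK⟩ := exists_nat_ge (1 / ν)
    exact ⟨K, by rwa [div_le_iff₀' hν] at hK⟩
  set c : ℝ := η ^ 2 / 2 * (ν ^ (K + 1)) ^ 3 with hc
  have hcpos : 0 < c := by positivity
  obtain ⟨L, n₀, hblow⟩ := exists_separated_blowup (Fin 3 × Fin (K + 2)) 4 c hcpos (by norm_num)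
  refine ⟨n₀, fun V _ H hn hexp hrefl σ x y hxy => ?_⟩
  obtain ⟨v, hv⟩ := exists_half_not_sameCycle hxy
  have : Nonempty V := ⟨v⟩
  have hnpos : (0 : ℝ) < Fintype.card V := by exact_mod_cast Fintype.card_pos
  obtain ⟨pos, hinj, hlt, hpos⟩ := exists_cycle_position σ
  have hwalk : ∀ a b, (ν * (Fintype.card V : ℝ)) ^ (K + 1) ≤ #(walkBlocks H (K + 1) a b) := by
    intro a b
    apply pow_le_card_walkBlocks hν.le
    rw [iterate_robustOut_eq_univ hτ hτν hexp.in_le hexp.expand hK]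
    · exact mem_univ _
    · refine lt_of_lt_of_le ?_ (hexp.out_le a)
      nlinarith
  let A : Fin 3 → Finset V := ![univ.filter fun z => ¬ σ.SameCycle v z,
    univ.filter fun z => H v z, univ.filter fun z => H z v]
  have hcount := card_closed_walks (by positivity) (K + 1) hwalk A
  have hE : c * (Fintype.card V : ℝ) ^ Fintype.card (Fin 3 × Fin (K + 2)) ≤
      #(univ.filter fun x : Fin 3 × Fin (K + 1 + 1) → V =>
        (∀ p, H (x p) (x (blockSucc (K + 1) p))) ∧ ∀ j, x (j, 0) ∈ A j) := by
    refine le_trans ?_ hcount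
    rw [Fin.prod_univ_three]
    have h0 : (Fintype.card V : ℝ) / 2 ≤ #(A 0) := hv
    have h1 : η * (Fintype.card V : ℝ) ≤ #(A 1) := hexp.out_le v
    have h2 : η * (Fintype.card V : ℝ) ≤ #(A 2) := hexp.in_le v
    calc c * (Fintype.card V : ℝ) ^ Fintype.card (Fin 3 × Fin (K + 2))
        = (Fintype.card V : ℝ) / 2 * (η * (Fintype.card V : ℝ)) * (η * (Fintype.card V : ℝ)) *
          ((ν * (Fintype.card V : ℝ)) ^ (K + 1)) ^ 3 := by
          rw [Fintype.card_prod, Fintype.card_fin, Fintype.card_fin, hc]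
          ring
      _ ≤ _ := by gcongr
  obtain ⟨U, t, hU, hUt, ht, htv, hUE⟩ := hblow pos hinj hlt hn v _ hE
  have hne : ∀ p, (U p).Nonempty := fun p => card_pos.1 (by rw [hU]; norm_num)
  choose e he using hne
  have hmem : ∀ x : Fin 3 × Fin (K + 2) → V, (∀ p, x p ∈ U p) →
      (∀ p, H (x p) (x (blockSucc (K + 1) p))) ∧ ∀ j, x (j, 0) ∈ A j := by
    intro x hx
    exact (mem_filter.1 (hUE (Fintype.mem_piFinset.2 hx))).2
  have hupd : ∀ p, ∀ z ∈ U p, ∀ q, Function.update e p z q ∈ U q := by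
    intro p z hz q
    by_cases hq : q = p
    · subst hq; simpa using hz
    · simpa [hq] using he q
  have hA : ∀ j, ∀ z ∈ U (j, 0), z ∈ A j := by
    intro j z hz
    simpa using (hmem _ (hupd _ z hz)).2 j
  have hH : ∀ p, ∀ a ∈ U p, ∀ b ∈ U (blockSucc (K + 1) p), H a b := by
    intro p a ha b hb
    have h1 := (hmem (Function.update (Function.update e p a) (blockSucc (K + 1) p) b) (by
      intro q
      by_cases hq : q = blockSucc (K + 1) p
      · subst hq; simpa using hb
      · simpa [hq] using hupd p a ha q)).1 p
    rwa [Function.update_self, Function.update_of_ne (blockSucc_ne _ _).symm,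
      Function.update_self] at h1
  obtain ⟨π, h1, h2, h3⟩ := exists_perm_of_separated_blowup hrefl hinj hpos hU hUt ht htv hH
    (fun z hz => by simpa [A] using hA 1 z hz) (fun z hz => by simpa [A] using hA 2 z hz)
  obtain ⟨z, hz, hvz⟩ := h3 (0, 0)
  refine ⟨π, h1, numSameCyclePairs_lt h2 (p := v) (q := z) ?_ hvz⟩
  simpa [A] using hA 0 z hz

theorem exists_isHamCycle_of_sameCycle {V : Type*} [Fintype V] [Nonempty V] {G : V → V → Prop}
    {σ : Perm V} (hG : ∀ x, G x (σ x)) (hσ : ∀ x y, σ.SameCycle x y) :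
    ∃ f : ZMod (Fintype.card V) → V, IsHamCycle G f := by
  obtain ⟨x₀⟩ := ‹Nonempty V›
  have : NeZero (Fintype.card V) := ⟨(Fintype.card_pos_iff.2 ⟨x₀⟩).ne'⟩
  have hon : σ.IsCycleOn ((univ : Finset V) : Set V) :=
    ⟨by simp, fun x _ y _ => hσ x y⟩
  have hcard : (σ ^ Fintype.card V) x₀ = x₀ := by
    simpa using hon.pow_card_apply (mem_univ x₀)
  have hmod : ∀ k : ℕ, (σ ^ (k % Fintype.card V)) x₀ = (σ ^ k) x₀ := by
    intro k
    have hfix : ∀ j : ℕ, ((σ ^ Fintype.card V) ^ j) x₀ = x₀ := by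
      intro j
      induction j with
      | zero => rfl
      | succ j ih => rw [pow_succ, Perm.mul_apply, hcard, ih]
    conv_rhs => rw [← Nat.mod_add_div k (Fintype.card V), pow_add, Perm.mul_apply, pow_mul, hfix]
  refine ⟨fun i => (σ ^ i.val) x₀, ?_, ?_⟩
  · rw [Fintype.bijective_iff_surjective_and_card]
    refine ⟨fun y => ?_, ZMod.card _⟩
    obtain ⟨k, hk, rfl⟩ := hon.exists_pow_eq (mem_univ x₀) (mem_univ y)
    rw [card_univ] at hk
    exact ⟨(k : ZMod (Fintype.card V)), by simp only [ZMod.val_natCast, hmod]⟩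
  · intro i
    have : (σ ^ (i + 1).val) x₀ = σ ((σ ^ i.val) x₀) := by
      rw [ZMod.val_add, hmod, pow_add, ← Perm.mul_apply]
      have h1 : (σ ^ (1 : ZMod (Fintype.card V)).val) x₀ = σ x₀ := by
        rw [ZMod.val_one_eq_one_mod, hmod, pow_one]
      rw [Perm.mul_apply, h1, Perm.mul_apply, ← Perm.mul_apply, ← Perm.mul_apply, ← pow_succ,
        ← pow_succ']
    simp only [this]
    exact hG _

open Classical in
theorem isDenseExpander_of_robustOutExpander {V : Type*} [Fintype V] {G : V → V → Prop}
    {η ν τ : ℝ}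
    (hdeg : ∀ x : V, η * (Fintype.card V : ℝ) ≤ (outDeg G x : ℝ) ∧
      η * (Fintype.card V : ℝ) ≤ (inDeg G x : ℝ))
    (hexp : RobustOutExpander G ν τ) : IsDenseExpander G η ν τ where
  out_le x := by
    refine (hdeg x).1.trans (le_of_eq ?_)
    rw [outDeg, Nat.card_eq_fintype_card, Fintype.card_subtype]
  in_le x := by
    refine (hdeg x).2.trans (le_of_eq ?_)
    rw [inDeg, Nat.card_eq_fintype_card, Fintype.card_subtype]
  expand S h1 h2 := by
    have hset : RobustOutNbhd G ν (S : Set V) = (robustOut G ν S : Set V) := by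
      ext x
      have : ({y ∈ (S : Set V) | G y x} : Set V) = ((S.filter fun y => G y x : Finset V) : Set V) := by
        ext y; simp
      simp only [RobustOutNbhd, robustOut, Set.mem_ofPred_eq, coe_filter, mem_univ, true_and]
      rw [← Set.ncard_coe_finset, ← this]
    have h3 := hexp (S : Set V) (by rwa [Set.ncard_coe_finset]) (by rwa [Set.ncard_coe_finset])
    rwa [hset, Set.ncard_coe_finset, Set.ncard_coe_finset] at h3

end Merging

/-- Kühn–Osthus–Treglown: for every η ∈ (0,1) there is τ ∈ (0,1) such that for every ν with
0 < ν ≤ τ there is n₀ such that every digraph on n ≥ n₀ vertices with minimum semidegree at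
least ηn which is a robust (ν, τ)-outexpander contains a Hamilton cycle. -/
theorem robust_outexpander_hamilton (η : ℝ) (hη0 : 0 < η) (hη1 : η < 1) :
    ∃ τ : ℝ, 0 < τ ∧ τ < 1 ∧
      ∀ ν : ℝ, 0 < ν → ν ≤ τ →
        ∃ n₀ : ℕ, ∀ (V : Type) [Fintype V] (G : V → V → Prop),
          Irreflexive G →
          n₀ ≤ Fintype.card V →
          (∀ x : V, η * (Fintype.card V : ℝ) ≤ (outDeg G x : ℝ) ∧
            η * (Fintype.card V : ℝ) ≤ (inDeg G x : ℝ)) →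
          RobustOutExpander G ν τ →
          ∃ f : ZMod (Fintype.card V) → V, IsHamCycle G f := by
  refine ⟨η / 2, by linarith, by linarith, fun ν hν hντ => ?_⟩
  obtain ⟨n₀, hn₀⟩ := exists_perm_more_sameCyclePairs (η := η) (ν := ν) (τ := η / 2) hη0
    (by linarith) hν (by linarith)
  refine ⟨n₀ + 1, fun V _ G _ hn hdeg hexp => ?_⟩
  have hV : Nonempty V := Fintype.card_pos_iff.1 (by omega)
  have hG := isDenseExpander_of_robustOutExpander hdeg hexp
  have hne : Nonempty {σ : Equiv.Perm V // ∀ x, G x (σ x)} := by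
    obtain ⟨σ, hσ⟩ := hG.exists_perm hν (by linarith)
    exact ⟨⟨σ, hσ⟩⟩
  obtain ⟨⟨σ, hσ⟩, hmax⟩ := Finite.exists_max
    (fun σ : {σ : Equiv.Perm V // ∀ x, G x (σ x)} => numSameCyclePairs σ.1)
  refine exists_isHamCycle_of_sameCycle hσ fun x y => ?_
  by_contra hxy
  obtain ⟨π, hπ, hlt⟩ := hn₀ V (fun x y => G x (σ y)) (by omega) (hG.comp_perm σ) hσ σ x y hxy
  exact absurd (hmax ⟨σ * π, hπ⟩) (not_le.2 hlt)
end

section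
/- For every d with 0 < d < 1 there exist ε > 0 and an integer n₀ such that every (ε, d)-super-regular digraph on n ≥ n₀ vertices contains a Hamilton cycle. -/
/-- The number of edges of `G` directed from `X` to `Y`. -/
noncomputable def eCount {V : Type*} (G : V → V → Prop) (X Y : Set V) : ℕ :=
  Nat.card {p : V × V // p.1 ∈ X ∧ p.2 ∈ Y ∧ G p.1 p.2}

/-- The density of the pair `(X, Y)` in `G`. -/
noncomputable def dens {V : Type*} (G : V → V → Prop) (X Y : Set V) : ℝ :=
  (eCount G X Y : ℝ) / ((X.ncard : ℝ) * (Y.ncard : ℝ))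

/-- `G` is (ε, d)-super-regular: it is ε-regular (w.r.t. its global density), and every
vertex has outdegree and indegree at least d·n. -/
def SuperRegular {V : Type*} [Fintype V] (G : V → V → Prop) (ε d : ℝ) : Prop :=
  (∀ X Y : Set V, ε * (Fintype.card V : ℝ) ≤ (X.ncard : ℝ) →
    ε * (Fintype.card V : ℝ) ≤ (Y.ncard : ℝ) →
    |dens G X Y - dens G Set.univ Set.univ| < ε) ∧
  ∀ x : V, d * (Fintype.card V : ℝ) ≤ (outDeg G x : ℝ) ∧
    d * (Fintype.card V : ℝ) ≤ (inDeg G x : ℝ)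

/-- `v 0, …, v (m - 1)` is a directed path on `m` vertices in `G`. -/
def IsDiPath {V : Type*} (G : V → V → Prop) (m : ℕ) (v : ℕ → V) : Prop :=
  (∀ i < m, ∀ j < m, v i = v j → i = j) ∧ ∀ i, i + 1 < m → G (v i) (v (i + 1))

/-- Every two vertex sets of size at least `r` are joined by an edge. -/
def BigSetsJoined {V : Type*} (G : V → V → Prop) (r : ℕ) : Prop :=
  ∀ X Y : Finset V, r ≤ X.card → r ≤ Y.card → ∃ x ∈ X, ∃ y ∈ Y, G x y

lemma IsDiPath.card_image {V : Type*} [DecidableEq V] {G : V → V → Prop} {m : ℕ} {v : ℕ → V}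
    (hv : IsDiPath G m v) {A : Finset ℕ} (hA : ∀ a ∈ A, a < m) :
    (A.image v).card = A.card :=
  Finset.card_image_of_injOn fun a ha b hb hab => hv.1 a (hA a ha) b (hA b hb) hab

/-- Moving the final segment of a path to the front of a middle segment. -/
lemma IsDiPath.rotate {V : Type*} {G : V → V → Prop} {m : ℕ} {v : ℕ → V}
    (hv : IsDiPath G m v) {i j : ℕ} (hi : 1 ≤ i) (hij : i ≤ j) (hj : j + 1 < m)
    (h₁ : G (v (m - 1)) (v i)) (h₂ : G (v (i - 1)) (v (j + 1))) :
    ∃ w, IsDiPath G m w ∧ (∀ t < i, w t = v t) ∧ w (m - 1) = v j := by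
  set ρ : ℕ → ℕ := fun t => if t < i then t else if t < i + (m - (j + 1)) then t - i + (j + 1)
    else t - (m - (j + 1)) with hρ
  refine ⟨fun t => v (ρ t), ⟨?_, ?_⟩, ?_, ?_⟩
  · intro a ha b hb hab
    have hlt : ∀ t < m, ρ t < m := by
      intro t ht
      simp only [hρ]
      split_ifs <;> omega
    have h := hv.1 _ (hlt a ha) _ (hlt b hb) hab
    simp only [hρ] at h
    split_ifs at h <;> omega
  · intro t ht
    by_cases c₁ : t + 1 < i
    · have e₁ : ρ t = t := by simp only [hρ]; split_ifs <;> omega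
      have e₂ : ρ (t + 1) = t + 1 := by simp only [hρ]; split_ifs <;> omega
      simpa only [e₁, e₂] using hv.2 t ht
    by_cases c₂ : t + 1 = i
    · have e₁ : ρ t = i - 1 := by simp only [hρ]; split_ifs <;> omega
      have e₂ : ρ (t + 1) = j + 1 := by simp only [hρ]; split_ifs <;> omega
      simpa only [e₁, e₂] using h₂
    by_cases c₃ : t + 1 = i + (m - (j + 1))
    · have e₁ : ρ t = m - 1 := by simp only [hρ]; split_ifs <;> omega
      have e₂ : ρ (t + 1) = i := by simp only [hρ]; split_ifs <;> omega
      simpa only [e₁, e₂] using h₁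
    have e : ρ (t + 1) = ρ t + 1 := by simp only [hρ]; split_ifs <;> omega
    have hlt : ρ t + 1 < m := by simp only [hρ]; split_ifs <;> omega
    simpa only [e] using hv.2 _ hlt
  · intro t ht
    simp [hρ, ht]
  · have e : ρ (m - 1) = j := by simp only [hρ]; split_ifs <;> omega
    simp only [e]

/-- Many early out-neighbours of the last vertex allow a rotation ending in any large set of
later positions. -/
lemma IsDiPath.exists_rotate {V : Type*} {G : V → V → Prop} {m r : ℕ} {v : ℕ → V}
    (hv : IsDiPath G m v) (hG : BigSetsJoined G r) (A T : Finset ℕ) (p k : ℕ) (hp : 1 ≤ p)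
    (hA : ∀ i ∈ A, p ≤ i ∧ i < k ∧ G (v (m - 1)) (v i)) (hT : ∀ j ∈ T, k ≤ j ∧ j + 1 < m)
    (hAr : r ≤ A.card) (hTr : r ≤ T.card) :
    ∃ w, IsDiPath G m w ∧ (∀ t < p, w t = v t) ∧ ∃ j ∈ T, w (m - 1) = v j := by
  classical
  rcases T.eq_empty_or_nonempty with rfl | ⟨j₀, hj₀⟩
  · have : r = 0 := by simpa using hTr
    subst this
    obtain ⟨x, hx, -⟩ := hG ∅ ∅ (by simp) (by simp)
    simp at hx
  have hkm := hT j₀ hj₀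
  have hA' : (A.image (fun i => i - 1)).card = A.card :=
    Finset.card_image_of_injOn fun a ha b hb hab => by
      have h₁ := hA a ha
      have h₂ := hA b hb
      omega
  have hT' : (T.image (fun j => j + 1)).card = T.card :=
    Finset.card_image_of_injective _ (add_left_injective 1)
  obtain ⟨x, hx, y, hy, hxy⟩ := hG ((A.image (fun i => i - 1)).image v)
    ((T.image (fun j => j + 1)).image v)
    (by
      rw [hv.card_image, hA']
      · exact hAr
      · intro a ha
        obtain ⟨i, hi, rfl⟩ := Finset.mem_image.1 ha
        have := hA i hi
        omega)
    (by
      rw [hv.card_image, hT']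
      · exact hTr
      · intro a ha
        obtain ⟨i, hi, rfl⟩ := Finset.mem_image.1 ha
        exact (hT i hi).2)
  simp only [Finset.mem_image, exists_exists_and_eq_and] at hx hy
  obtain ⟨i, hi, rfl⟩ := hx
  obtain ⟨j, hj, rfl⟩ := hy
  obtain ⟨hi₁, hi₂, hi₃⟩ := hA i hi
  obtain ⟨hj₁, hj₂⟩ := hT j hj
  obtain ⟨w, hw, hw₁, hw₂⟩ := hv.rotate (hp.trans hi₁) (by omega) hj₂ hi₃ hxy
  exact ⟨w, hw, fun t ht => hw₁ t (by omega), j, hj, hw₂⟩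

/-- A path whose last vertex has many out-neighbours before position `k`, and whose first vertex
has many in-neighbours from position `k` on, can be turned into a cycle. -/
lemma IsDiPath.exists_cycle {V : Type*} {G : V → V → Prop} {m r : ℕ} {v : ℕ → V}
    (hv : IsDiPath G m v) (hG : BigSetsJoined G r) (A T : Finset ℕ) (k : ℕ)
    (hA : ∀ i ∈ A, i < k ∧ G (v (m - 1)) (v i))
    (hT : ∀ j ∈ T, k ≤ j ∧ j < m ∧ G (v j) (v 0))
    (hAr : r ≤ A.card) (hTr : r ≤ T.card) :
    ∃ w, IsDiPath G m w ∧ G (w (m - 1)) (w 0) := by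
  by_cases h : G (v (m - 1)) (v 0)
  · exact ⟨v, hv, h⟩
  obtain ⟨w, hw, hw₁, j, hj, hw₂⟩ := hv.exists_rotate hG A T 1 k le_rfl
    (fun i hi => ⟨by
      rcases Nat.eq_zero_or_pos i with rfl | h'
      · exact absurd (hA 0 hi).2 h
      · exact h', hA i hi⟩)
    (fun j hj => by
      obtain ⟨h₁, h₂, h₃⟩ := hT j hj
      refine ⟨h₁, ?_⟩
      rcases Nat.lt_or_ge (j + 1) m with h' | h'
      · exact h'
      · obtain rfl : j = m - 1 := by omega
        exact absurd h₃ h) hAr hTr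
  exact ⟨w, hw, by rw [hw₂, hw₁ 0 one_pos]; exact (hT j hj).2.2⟩

lemma exists_card_filter_lt_eq (S : Finset ℕ) (r : ℕ) (hr : r ≤ S.card) :
    ∃ k, (S.filter (· < k)).card = r := by
  induction r with
  | zero => exact ⟨0, by simp⟩
  | succ r ih =>
    obtain ⟨k, hk⟩ := ih (by omega)
    have hne : (S.filter (fun x => ¬ x < k)).Nonempty := by
      rw [← Finset.card_pos]
      have := Finset.card_filter_add_card_filter_not (s := S) (fun x => x < k)
      omega
    set a := (S.filter (fun x => ¬ x < k)).min' hne with ha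
    have hmem := Finset.min'_mem _ hne
    rw [← ha, Finset.mem_filter] at hmem
    refine ⟨a + 1, ?_⟩
    have : S.filter (· < a + 1) = insert a (S.filter (· < k)) := by
      ext x
      simp only [Finset.mem_filter, Finset.mem_insert]
      constructor
      · rintro ⟨hx, hxa⟩
        by_cases hxk : x < k
        · exact Or.inr ⟨hx, hxk⟩
        · have h : a ≤ x := Finset.min'_le _ x (Finset.mem_filter.2 (And.intro hx hxk))
          exact Or.inl (by omega)
      · rintro (rfl | ⟨hx, hxk⟩)
        · exact ⟨hmem.1, by omega⟩
        · exact ⟨hx, by omega⟩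
    rw [this, Finset.card_insert_of_notMem (by simp [hmem.2]), hk]

/-- In a longest path, the last vertex has all its out-neighbours on the path. -/
lemma IsDiPath.le_card_out {V : Type*} [Fintype V] [DecidableEq V] {G : V → V → Prop}
    [DecidableRel G] {m D : ℕ}
    {v : ℕ → V} (hv : IsDiPath G m v) (hm : 1 ≤ m) (hmax : ∀ w, ¬ IsDiPath G (m + 1) w)
    (hD : D ≤ (Finset.univ.filter (G (v (m - 1)))).card) :
    D ≤ ((Finset.range m).filter (fun i => G (v (m - 1)) (v i))).card := by
  refine hD.trans (le_trans (Finset.card_le_card ?_) (Finset.card_image_le (f := v)))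
  intro x hx
  simp only [Finset.mem_filter, Finset.mem_univ, true_and, Finset.mem_image,
    Finset.mem_range] at hx ⊢
  by_contra hcon
  have hx' : ∀ i < m, v i ≠ x := fun i hi h => hcon ⟨i, ⟨hi, h ▸ hx⟩, h⟩
  refine hmax (fun t => if t < m then v t else x) ⟨?_, ?_⟩
  · intro a ha b hb hab
    simp only at hab
    split_ifs at hab with h₁ h₂ h₂
    · exact hv.1 a h₁ b h₂ hab
    · exact absurd hab (hx' a h₁)
    · exact absurd hab.symm (hx' b h₂)
    · omega
  · intro t ht
    by_cases h : t + 1 < m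
    · simpa [h, (by omega : t < m)] using hv.2 t h
    · obtain rfl : t = m - 1 := by omega
      simpa [h, (by omega : m - 1 < m)] using hx

/-- In a longest path, the first vertex has all its in-neighbours on the path. -/
lemma IsDiPath.le_card_in {V : Type*} [Fintype V] [DecidableEq V] {G : V → V → Prop}
    [DecidableRel G] {m D : ℕ}
    {v : ℕ → V} (hv : IsDiPath G m v) (hmax : ∀ w, ¬ IsDiPath G (m + 1) w)
    (hD : D ≤ (Finset.univ.filter (fun x => G x (v 0))).card) :
    D ≤ ((Finset.range m).filter (fun i => G (v i) (v 0))).card := by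
  refine hD.trans (le_trans (Finset.card_le_card ?_) (Finset.card_image_le (f := v)))
  intro x hx
  simp only [Finset.mem_filter, Finset.mem_univ, true_and, Finset.mem_image,
    Finset.mem_range] at hx ⊢
  by_contra hcon
  have hx' : ∀ i < m, v i ≠ x := fun i hi h => hcon ⟨i, ⟨hi, h ▸ hx⟩, h⟩
  refine hmax (fun t => if t = 0 then x else v (t - 1)) ⟨?_, ?_⟩
  · intro a ha b hb hab
    simp only at hab
    split_ifs at hab with h₁ h₂ h₂
    · omega
    · exact absurd hab.symm (hx' _ (by omega))
    · exact absurd hab (hx' _ (by omega))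
    · have := hv.1 _ (by omega) _ (by omega) hab
      omega
  · intro t ht
    rcases Nat.eq_zero_or_pos t with rfl | h
    · simpa using hx
    · have := hv.2 (t - 1) (by omega)
      simpa [h.ne', Nat.sub_add_cancel h] using this

/-- A longest path can be closed to a cycle. -/
lemma IsDiPath.exists_cycle_of_longest {V : Type*} [Fintype V] [DecidableEq V]
    {G : V → V → Prop} [DecidableRel G] {m r q D : ℕ} {v : ℕ → V} (hv : IsDiPath G m v)
    (hm : 1 ≤ m) (hmax : ∀ w, ¬ IsDiPath G (m + 1) w) (hr : 1 ≤ r) (hG : BigSetsJoined G r)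
    (hq : ∀ X : Finset V, q ≤ X.card →
      (Finset.univ.filter (fun y => (X.filter (G y)).card < r)).card < r)
    (hout : ∀ x, D ≤ (Finset.univ.filter (G x)).card)
    (hin : ∀ y, D ≤ (Finset.univ.filter (fun x => G x y)).card)
    (hDr : 4 * r ≤ D) (hDq : q + 2 * r ≤ D) :
    ∃ w, IsDiPath G m w ∧ G (w (m - 1)) (w 0) := by
  have hAD := hv.le_card_out hm hmax (hout _)
  have hBD := hv.le_card_in hmax (hin _)
  set A := (Finset.range m).filter (fun i => G (v (m - 1)) (v i)) with hA
  set B := (Finset.range m).filter (fun i => G (v i) (v 0)) with hB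
  have hAm : ∀ i ∈ A, i < m ∧ G (v (m - 1)) (v i) := by simp [hA]
  have hBm : ∀ i ∈ B, i < m ∧ G (v i) (v 0) := by simp [hB]
  obtain ⟨a, ha⟩ := exists_card_filter_lt_eq A r (by omega)
  by_cases hBa : r ≤ (B.filter (fun j => ¬ j < a)).card
  · refine hv.exists_cycle hG (A.filter (· < a)) (B.filter (fun j => ¬ j < a)) a ?_ ?_ ha.ge hBa
    · intro i hi
      rw [Finset.mem_filter] at hi
      exact ⟨hi.2, (hAm i hi.1).2⟩
    · intro j hj
      rw [Finset.mem_filter] at hj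
      exact ⟨by omega, hBm j hj.1⟩
  have hBa' := Finset.card_filter_add_card_filter_not (s := B) (fun x => x < a)
  have ha1 : 1 ≤ a := by
    by_contra h
    obtain rfl : a = 0 := by omega
    simp at ha
    omega
  obtain ⟨u, hu⟩ := exists_card_filter_lt_eq (B.filter (· < a)) q (by omega)
  have hu' := Finset.card_filter_add_card_filter_not (s := B.filter (· < a)) (fun x => x < u)
  obtain ⟨k, hk⟩ := exists_card_filter_lt_eq A (2 * r) (by omega)
  have hk' := Finset.card_filter_add_card_filter_not (s := A) (fun x => x < k)
  have hkm : D - 2 * r + k ≤ m := by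
    have h : A.filter (fun x => ¬ x < k) ⊆ Finset.Ico k m := by
      intro x hx
      rw [Finset.mem_filter] at hx
      have := hAm x hx.1
      simp
      omega
    have := Finset.card_le_card h
    rw [Nat.card_Ico] at this
    omega
  have hAk : r ≤ ((A.filter (· < k)).filter (fun x => ¬ x < a)).card := by
    have h₁ := Finset.card_filter_add_card_filter_not (s := A.filter (· < k)) (fun x => x < a)
    have h₂ : ((A.filter (· < k)).filter (fun x => x < a)).card ≤ (A.filter (· < a)).card :=
      Finset.card_le_card (Finset.filter_subset_filter _ (Finset.filter_subset _ _))
    omega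
  have hum : ∀ x ∈ (B.filter (· < a)).filter (fun x => ¬ x < u), x < m ∧ x < a ∧ u ≤ x ∧
      G (v x) (v 0) := by
    intro x hx
    simp only [Finset.mem_filter] at hx
    exact ⟨(hBm x hx.1.1).1, hx.1.2, by omega, (hBm x hx.1.1).2⟩
  have hur : r ≤ ((B.filter (· < a)).filter (fun x => ¬ x < u)).card := by omega
  obtain ⟨b, hb⟩ : ((B.filter (· < a)).filter (fun x => ¬ x < u)).Nonempty := by
    rw [← Finset.card_pos]; omega
  have hbm := hum b hb
  set X := (Finset.range u).image v with hX
  have hXq : q ≤ X.card := by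
    rw [hX, hv.card_image (by simp; omega), ← hu]
    refine Finset.card_le_card fun x hx => ?_
    simp only [Finset.mem_filter] at hx
    simpa using hx.2
  have hfew := hq X hXq
  set T := (Finset.Ico k (m - 1)).filter (fun j => ¬ (X.filter (G (v j))).card < r) with hT
  have hTr : r ≤ T.card := by
    have h₁ := Finset.card_filter_add_card_filter_not (s := Finset.Ico k (m - 1))
      (fun j => (X.filter (G (v j))).card < r)
    rw [Nat.card_Ico, ← hT] at h₁
    have h₂ : ((Finset.Ico k (m - 1)).filter (fun j => (X.filter (G (v j))).card < r)).card ≤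
        (Finset.univ.filter (fun y => (X.filter (G y)).card < r)).card := by
      rw [← hv.card_image (A := (Finset.Ico k (m - 1)).filter _)]
      · refine Finset.card_le_card fun y hy => ?_
        obtain ⟨j, hj, rfl⟩ := Finset.mem_image.1 hy
        simpa using (Finset.mem_filter.1 hj).2
      · intro j hj
        have := Finset.mem_Ico.1 (Finset.mem_filter.1 hj).1
        omega
    omega
  obtain ⟨w, hw, hwv, j, hj, hwj⟩ := hv.exists_rotate hG
    ((A.filter (· < k)).filter (fun x => ¬ x < a)) T a k ha1
    (fun i hi => by
      simp only [Finset.mem_filter] at hi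
      exact ⟨by omega, hi.1.2, (hAm i hi.1.1).2⟩)
    (fun j hj => by
      have := Finset.mem_Ico.1 (Finset.mem_filter.1 hj).1
      omega) hAk hTr
  refine hw.exists_cycle hG ((Finset.range u).filter (fun i => G (v j) (v i)))
    ((B.filter (· < a)).filter (fun x => ¬ x < u)) u ?_ ?_ ?_ hur
  · intro i hi
    rw [Finset.mem_filter, Finset.mem_range] at hi
    rw [hwj, hwv i (by omega)]
    exact hi
  · intro x hx
    obtain ⟨h₁, h₂, h₃, h₄⟩ := hum x hx
    rw [hwv x h₂, hwv 0 (by omega)]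
    exact ⟨h₃, h₁, h₄⟩
  · have h := not_lt.1 (Finset.mem_filter.1 hj).2
    refine h.trans (le_trans (Finset.card_le_card ?_) (Finset.card_image_le (f := v)))
    intro x hx
    simp only [hX, Finset.mem_filter, Finset.mem_image, Finset.mem_range] at hx ⊢
    obtain ⟨⟨i, hi, rfl⟩, hi'⟩ := hx
    exact ⟨i, ⟨hi, hi'⟩, rfl⟩

/-- A cycle entered by an edge from outside yields a longer path. -/
lemma IsDiPath.extend_cycle {V : Type*} {G : V → V → Prop} {m : ℕ} {v : ℕ → V}
    (hv : IsDiPath G m v) (hcyc : G (v (m - 1)) (v 0)) {x : V} (hx : ∀ i < m, v i ≠ x)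
    {k : ℕ} (hk : k < m) (hxk : G x (v k)) : ∃ w, IsDiPath G (m + 1) w := by
  set ρ : ℕ → ℕ := fun t => if k + (t - 1) < m then k + (t - 1) else k + (t - 1) - m with hρ
  have hlt : ∀ t < m + 1, ρ t < m := by
    intro t ht
    simp only [hρ]
    split_ifs <;> omega
  refine ⟨fun t => if t = 0 then x else v (ρ t), ?_, ?_⟩
  · intro a ha b hb hab
    simp only at hab
    by_cases h₁ : a = 0 <;> by_cases h₂ : b = 0
    · omega
    · simp only [h₁, h₂, if_true, if_false] at hab
      exact absurd hab.symm (hx _ (hlt b hb))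
    · simp only [h₁, h₂, if_true, if_false] at hab
      exact absurd hab (hx _ (hlt a ha))
    · simp only [h₁, h₂, if_false] at hab
      have := hv.1 _ (hlt a ha) _ (hlt b hb) hab
      simp only [hρ] at this
      split_ifs at this <;> omega
  · intro t ht
    rcases Nat.eq_zero_or_pos t with rfl | h
    · simpa [hρ, hk] using hxk
    simp only [h.ne', if_false, Nat.succ_ne_zero]
    by_cases c : k + (t - 1) = m - 1
    · have e₁ : ρ t = m - 1 := by simp only [hρ]; split_ifs <;> omega
      have e₂ : ρ (t + 1) = 0 := by simp only [hρ]; split_ifs <;> omega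
      rw [e₁, e₂]
      exact hcyc
    · have e : ρ (t + 1) = ρ t + 1 := by simp only [hρ]; split_ifs <;> omega
      rw [e]
      refine hv.2 _ ?_
      simp only [hρ]
      split_ifs <;> omega

/-- A cycle through all vertices, as a function on `ZMod`. -/
lemma IsDiPath.isHamCycle {V : Type*} [Fintype V] {G : V → V → Prop} {v : ℕ → V}
    (hn : 1 ≤ Fintype.card V) (hv : IsDiPath G (Fintype.card V) v)
    (hcyc : G (v (Fintype.card V - 1)) (v 0)) :
    ∃ f : ZMod (Fintype.card V) → V, IsHamCycle G f := by
  have : NeZero (Fintype.card V) := ⟨by omega⟩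
  refine ⟨fun i => v i.val, ?_, ?_⟩
  · rw [Fintype.bijective_iff_injective_and_card]
    refine ⟨fun a b hab => ?_, ZMod.card _⟩
    exact ZMod.val_injective _ (hv.1 _ (ZMod.val_lt a) _ (ZMod.val_lt b) hab)
  · intro i
    have hi := ZMod.val_lt i
    have hval : (i + 1).val = (i.val + 1) % Fintype.card V := by
      rw [ZMod.val_add, ZMod.val_one_eq_one_mod, Nat.add_mod_mod]
    simp only [hval]
    by_cases c : i.val + 1 < Fintype.card V
    · rw [Nat.mod_eq_of_lt c]
      exact hv.2 _ c
    · have : i.val + 1 = Fintype.card V := by omega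
      rw [this, Nat.mod_self, show i.val = Fintype.card V - 1 by omega]
      exact hcyc

lemma exists_isHamCycle_of_expansion {V : Type*} [Fintype V] [DecidableEq V]
    {G : V → V → Prop} [DecidableRel G] {r q D : ℕ} (hn : 1 ≤ Fintype.card V)
    (hr : 1 ≤ r) (hG : BigSetsJoined G r)
    (hq : ∀ X : Finset V, q ≤ X.card →
      (Finset.univ.filter (fun y => (X.filter (G y)).card < r)).card < r)
    (hout : ∀ x, D ≤ (Finset.univ.filter (G x)).card)
    (hin : ∀ y, D ≤ (Finset.univ.filter (fun x => G x y)).card)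
    (hDr : 4 * r ≤ D) (hDq : q + 2 * r ≤ D) :
    ∃ f : ZMod (Fintype.card V) → V, IsHamCycle G f := by
  have hbound : ∀ m, (∃ v, IsDiPath G m v) → m ≤ Fintype.card V := by
    rintro m ⟨v, hv⟩
    have := hv.card_image (A := Finset.range m) (by simp)
    rw [Finset.card_range] at this
    rw [← this]
    exact Finset.card_le_univ _
  obtain ⟨x₀⟩ : Nonempty V := Fintype.card_pos_iff.1 hn
  have hone : ∃ v, IsDiPath G 1 v :=
    ⟨fun _ => x₀, fun i hi j hj _ => by omega, fun i hi => by omega⟩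
  classical
  set m := Nat.findGreatest (fun m => ∃ v, IsDiPath G m v) (Fintype.card V) with hm
  have hm1 : 1 ≤ m := Nat.le_findGreatest hn hone
  obtain ⟨v₀, hv₀⟩ : ∃ v, IsDiPath G m v :=
    Nat.findGreatest_spec (P := fun m => ∃ v, IsDiPath G m v) hn hone
  have hmax : ∀ w, ¬ IsDiPath G (m + 1) w := by
    intro w hw
    have := Nat.le_findGreatest (P := fun m => ∃ v, IsDiPath G m v) (hbound _ ⟨w, hw⟩) ⟨w, hw⟩
    omega
  obtain ⟨v, hv, hcyc⟩ := hv₀.exists_cycle_of_longest hm1 hmax hr hG hq hout hin hDr hDq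
  have hDm : D ≤ m := by
    have := hv.le_card_out hm1 hmax (hout _)
    exact this.trans ((Finset.card_filter_le _ _).trans (Finset.card_range m).le)
  have hmn : m = Fintype.card V := by
    by_contra hne
    have hcard := hv.card_image (A := Finset.range m) (by simp)
    rw [Finset.card_range] at hcard
    obtain ⟨x, hx⟩ : ∃ x, x ∉ (Finset.range m).image v := by
      by_contra! h
      have : (Finset.range m).image v = Finset.univ := Finset.eq_univ_of_forall h
      rw [this, Finset.card_univ] at hcard
      exact hne hcard.symm
    obtain ⟨y, hy, k, hk, hyk⟩ : ∃ y, y ∉ (Finset.range m).image v ∧ ∃ k < m, G y (v k) := by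
      by_cases hxc : ∃ k < m, G x (v k)
      · exact ⟨x, hx, hxc⟩
      have hsub : Finset.univ.filter (G x) ⊆ Finset.univ.filter
          (fun y => y ∉ (Finset.range m).image v) := by
        intro y hy
        simp only [Finset.mem_filter, Finset.mem_univ, true_and, Finset.mem_image,
          Finset.mem_range, not_exists, not_and] at hy ⊢
        rintro i hi rfl
        exact hxc ⟨i, hi, hy⟩
      obtain ⟨y, hy, z, hz, hyz⟩ := hG _ ((Finset.range m).image v)
        (le_trans (by omega) ((hout x).trans (Finset.card_le_card hsub))) (by omega)
      obtain ⟨k, hk, rfl⟩ := Finset.mem_image.1 hz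
      exact ⟨y, (Finset.mem_filter.1 hy).2, k, Finset.mem_range.1 hk, hyz⟩
    obtain ⟨w, hw⟩ := hv.extend_cycle hcyc
      (fun i hi h => hy (Finset.mem_image.2 ⟨i, Finset.mem_range.2 hi, h⟩)) hk hyk
    exact hmax w hw
  rw [hmn] at hv hcyc
  exact hv.isHamCycle hn hcyc

lemma outDeg_eq_card_filter {V : Type*} [Fintype V] (G : V → V → Prop) [DecidableRel G] (x : V) :
    outDeg G x = (Finset.univ.filter (G x)).card := by
  rw [outDeg, Nat.card_eq_fintype_card, Fintype.card_subtype]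

lemma inDeg_eq_card_filter {V : Type*} [Fintype V] (G : V → V → Prop) [DecidableRel G] (x : V) :
    inDeg G x = (Finset.univ.filter (fun y => G y x)).card := by
  rw [inDeg, Nat.card_eq_fintype_card, Fintype.card_subtype]

lemma eCount_eq_sum {V : Type*} [Fintype V] [DecidableEq V] (G : V → V → Prop) [DecidableRel G]
    (X Y : Finset V) : eCount G X Y = ∑ x ∈ X, (Y.filter (G x)).card := by
  rw [eCount, Nat.card_eq_fintype_card, Fintype.card_subtype, ← Finset.card_sigma]
  refine Finset.card_bij' (fun p _ => ⟨p.1, p.2⟩) (fun s _ => (s.1, s.2)) ?_ ?_ ?_ ?_ <;>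
    simp

lemma le_dens_univ {V : Type*} [Fintype V] {G : V → V → Prop} {d : ℝ}
    (hn : 1 ≤ Fintype.card V) (h : ∀ x, d * (Fintype.card V : ℝ) ≤ outDeg G x) :
    d ≤ dens G Set.univ Set.univ := by
  classical
  have hn' : (0 : ℝ) < Fintype.card V := by exact_mod_cast hn
  have hsum := eCount_eq_sum G Finset.univ Finset.univ
  rw [Finset.coe_univ] at hsum
  rw [dens, Set.ncard_univ, Nat.card_eq_fintype_card, le_div_iff₀ (by positivity), hsum]
  push_cast
  calc d * ((Fintype.card V : ℝ) * Fintype.card V)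
      = ∑ _x : V, d * (Fintype.card V : ℝ) := by
        rw [Finset.sum_const, Finset.card_univ, nsmul_eq_mul]; ring
    _ ≤ _ := Finset.sum_le_sum fun x _ => by rw [← outDeg_eq_card_filter]; exact h x

/-- For every d ∈ (0,1) there exist ε > 0 and n₀ such that every (ε, d)-super-regular
digraph on n ≥ n₀ vertices contains a Hamilton cycle. -/
theorem super_regular_hamilton (d : ℝ) (hd0 : 0 < d) (hd1 : d < 1) :
    ∃ ε : ℝ, 0 < ε ∧
      ∃ n₀ : ℕ, ∀ (V : Type) [Fintype V] (G : V → V → Prop),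
        Irreflexive G →
        n₀ ≤ Fintype.card V →
        SuperRegular G ε d →
        ∃ f : ZMod (Fintype.card V) → V, IsHamCycle G f := by
  refine ⟨d ^ 2 / 100, by positivity, ⌈100 / d ^ 2⌉₊, ?_⟩
  intro V _ G _ hn ⟨hreg, hdeg⟩
  classical
  set n := Fintype.card V with hn_def
  set ε := d ^ 2 / 100 with hε
  have hdd : d ^ 2 < d := by nlinarith
  have hd2 : 0 < d ^ 2 := by positivity
  have hn₁ : 1 ≤ ε * n := by
    have h := Nat.ceil_le.1 hn
    rw [div_le_iff₀ hd2] at h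
    rw [hε]
    linarith
  have hεd : ε ≤ d / 100 := by rw [hε]; linarith
  have hn0 : 1 ≤ n := by
    rcases Nat.eq_zero_or_pos n with h | h
    · rw [h] at hn₁; norm_num at hn₁
    · exact h
  have hn0' : (0 : ℝ) < n := by exact_mod_cast hn0
  have hdn : ε * n ≤ d * n / 100 := by nlinarith
  have hdens := le_dens_univ hn0 fun x => (hdeg x).1
  set r := ⌈ε * n⌉₊ with hr
  set q := ⌈d * n / 3⌉₊ with hq
  set D := ⌈d * n⌉₊ with hD
  have hr₁ : ε * n ≤ r := Nat.le_ceil _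
  have hr₂ : (r : ℝ) < ε * n + 1 := Nat.ceil_lt_add_one (by positivity)
  have hq₁ : d * n / 3 ≤ q := Nat.le_ceil _
  have hq₂ : (q : ℝ) < d * n / 3 + 1 := Nat.ceil_lt_add_one (by positivity)
  have hD₁ : d * n ≤ D := Nat.le_ceil _
  have hrpos : (0 : ℝ) < r := by linarith
  have hqpos : (0 : ℝ) < q := by linarith
  have hreg' : ∀ X Y : Finset V, r ≤ X.card → r ≤ Y.card →
      (d - ε) * (X.card * Y.card) < ((∑ x ∈ X, (Y.filter (G x)).card : ℕ) : ℝ) := by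
    intro X Y hX hY
    have hX' : (r : ℝ) ≤ X.card := by exact_mod_cast hX
    have hY' : (r : ℝ) ≤ Y.card := by exact_mod_cast hY
    have h := hreg X Y (by rw [Set.ncard_coe_finset]; linarith)
      (by rw [Set.ncard_coe_finset]; linarith)
    have h' := (abs_lt.1 h).1
    have h'' : d - ε < dens G X Y := by linarith
    have hX0 : (0 : ℝ) < X.card := by linarith
    have hY0 : (0 : ℝ) < Y.card := by linarith
    rwa [dens, Set.ncard_coe_finset, Set.ncard_coe_finset, eCount_eq_sum,
      lt_div_iff₀ (by positivity)] at h''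
  refine exists_isHamCycle_of_expansion (r := r) (q := q) (D := D) hn0
    (by exact_mod_cast hrpos) ?_ ?_ ?_ ?_ ?_ ?_
  · intro X Y hX hY
    by_contra! hcon
    have h := hreg' X Y hX hY
    rw [Finset.sum_eq_zero] at h
    · have : 0 ≤ (d - ε) * ((X.card : ℝ) * Y.card) :=
        mul_nonneg (by linarith) (by positivity)
      norm_num at h
      linarith
    · intro x hx
      rw [Finset.card_eq_zero, Finset.filter_eq_empty_iff]
      exact fun y hy => hcon x hx y hy
  · intro X hX
    by_contra! hcon
    have hX' : (q : ℝ) ≤ X.card := by exact_mod_cast hX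
    set Y := Finset.univ.filter (fun y => (X.filter (G y)).card < r) with hY
    have hrX : r ≤ X.card := by
      have : (r : ℝ) ≤ X.card := by linarith
      exact_mod_cast this
    have h := hreg' Y X hcon hrX
    have hle : ∑ y ∈ Y, (X.filter (G y)).card ≤ Y.card * r := by
      rw [← smul_eq_mul]
      exact Finset.sum_le_card_nsmul _ _ _ fun y hy => (Finset.mem_filter.1 hy).2.le
    have hle' : ((∑ y ∈ Y, (X.filter (G y)).card : ℕ) : ℝ) ≤ Y.card * r := by
      exact_mod_cast hle
    have hY0 : (0 : ℝ) < Y.card := lt_of_lt_of_le hrpos (by exact_mod_cast hcon)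
    have hrq : (r : ℝ) ≤ (d - ε) * X.card := by
      have h₁ : d / 2 * (d * n / 3) ≤ (d - ε) * X.card :=
        mul_le_mul (by linarith) (by linarith) (by positivity) (by linarith)
      have h₂ : d / 2 * (d * n / 3) = 100 / 6 * (ε * n) := by rw [hε]; ring
      linarith
    have := mul_le_mul_of_nonneg_left hrq hY0.le
    linarith
  · intro x
    rw [← outDeg_eq_card_filter]
    exact Nat.ceil_le.2 (hdeg x).1
  · intro x
    exact (Nat.ceil_le.2 (hdeg x).2).trans (inDeg_eq_card_filter G x).le
  · have : (4 * r : ℝ) ≤ D := by linarith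
    exact_mod_cast this
  · have : (q + 2 * r : ℝ) ≤ D := by linarith
    exact_mod_cast this
end
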